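/- arXiv:1801.04591 — 2 statements merged into one kernel-verified Lean document; each statement's English description precedes it below -/
import Mathlib

section
/- Let (a,b) ⊆ ℝ be a bounded interval, let k be a positive integer, let c : (0,b−a) → [0,∞) be nonincreasing and measurable, and let u : (a,b) → ℤ be measurable with finite image. Then there exists a nondecreasing measurable function v : (a,b) → ℤ such that for every j ∈ ℤ the Lebesgue measure of {x ∈ (a,b) : v(x) = j} equals the Lebesgue measure of {x ∈ (a,b) : u(x) = j}, and ℱ_k(c,v) ≤ ℱ_k(c,u). -/
/-! The core is a combinatorial fact (`closePairs_le`): among all orderings of a finite integer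
sequence, the sorted one has the most pairs of entries that are at distance at most `m` in position
and at most `k` in value. Delete a maximal entry `M`, standing at position `p`. The pairs straddling
`p` move one step closer, so that each close-valued pair formerly at distance `m + 1` becomes a new
close pair, while the close neighbours of `p` are lost. The positions `p - m, …, p - 1` and
`p + 1, …, p + m` are matched by a shift by `m + 1`, and any two entries in `[M - k, M]` differ by at
most `k`; hence the loss exceeds the gain by at most the minimum of `m` and the number of remaining
entries in `[M - k, M]`. For the sorted sequence that minimum is attained with no gain at all, and
induction on the length applies.

Abel summation extends this to any nonincreasing weight of the distance (`sum_far_le`). For a step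
function on equal cells the hostility is an average, over two offsets inside a cell, of such weighted
sums, so the inequality holds for step functions (`hostility_stepFn_sorted_le`). For a bounded cost
the hostility is stable under changes on sets of small measure (`hostility_le_add`), every admissible
`u` agrees with a step function off a set of small measure (`exists_stepFn`), and the sorted step
function is then close to the rearrangement of `u` because superlevel sets of monotone functions are
nested (`monotone_diff`). This gives the theorem for bounded costs, and the general case follows by
truncating the cost and monotone convergence (`hostility_eq_iSup`). -/

open MeasureTheory Set ENNReal

/-- The interaction law `φ_k`. -/
noncomputable def phik (k t : ℝ) : ℝ := if t ≤ k then 0 else 1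

/-- The total `k`-hostility `ℱ_k(c,u)` of a semi-discrete arrangement `u : (a,b) → ℤ`. -/
noncomputable def semiDiscreteHostility (a b : ℝ) (k : ℕ) (c : ℝ → ℝ) (u : ℝ → ℤ) : ℝ≥0∞ :=
  ∫⁻ x in Set.Ioo a b, ∫⁻ y in Set.Ioo a b,
    ENNReal.ofReal (phik (k : ℝ) ((|u y - u x| : ℤ) : ℝ) * c |y - x|)

/-! ### The discrete inequality -/

/-- The number of pairs `i < j` of indices below `N`, at distance at most `m`, whose `u`-values
differ by at most `k`. -/
def closePairs (k : ℤ) (m N : ℕ) (u : ℕ → ℤ) : ℕ :=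
  ∑ i ∈ Finset.range N, ∑ j ∈ Finset.range N,
    if i < j ∧ j ≤ i + m ∧ |u j - u i| ≤ k then 1 else 0

/-- The increasing enumeration of `ℕ \ {p}`; composing a sequence with it deletes entry `p`. -/
def skip (p i : ℕ) : ℕ := if i < p then i else i + 1

lemma sum_range_skip {A : Type*} [AddCommMonoid A] (f : ℕ → A) (p N : ℕ) (hp : p ≤ N) :
    ∑ i ∈ Finset.range (N + 1), f i = f p + ∑ i ∈ Finset.range N, f (skip p i) := by
  induction N with
  | zero =>
    obtain rfl : p = 0 := by omega
    simp
  | succ n ih =>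
    rcases Nat.lt_or_ge n p with h | h
    · obtain rfl : p = n + 1 := by omega
      rw [Finset.sum_range_succ, add_comm]
      congr 1
      refine Finset.sum_congr rfl fun i hi => ?_
      have := Finset.mem_range.1 hi
      simp [skip, this]
    · rw [Finset.sum_range_succ, ih h, Finset.sum_range_succ _ n, add_assoc]
      congr 3
      simp [skip, Nat.not_lt.2 h]

/-- Matching the window of length `m` left of `p` with the one right of `p` by a shift by `m`: the
elements of both windows satisfying `P` number at most `m` plus the number of matched pairs with
both members satisfying `P`. -/
lemma window_count (P : ℕ → Prop) [DecidablePred P] (p m N : ℕ) :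
    (∑ i ∈ Finset.range N, if p ≤ i ∧ i + 1 ≤ p + m ∧ P i then 1 else 0) +
      (∑ i ∈ Finset.range N, if i < p ∧ p ≤ i + m ∧ P i then 1 else 0) ≤
    m + ∑ i ∈ Finset.range N, ∑ j ∈ Finset.range N,
      if i < p ∧ p ≤ j ∧ j = i + m ∧ P i ∧ P j then 1 else 0 := by
  set R := (Finset.range N).filter fun i => p ≤ i ∧ i + 1 ≤ p + m ∧ P i with hR
  set L := (Finset.range N).filter fun i => i < p ∧ p ≤ i + m ∧ P i with hL
  set L' := L.image (· + m) with hL'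
  have hLc : L'.card = L.card := Finset.card_image_of_injective _ (add_left_injective m)
  have hU : (R ∪ L').card ≤ m := by
    have : R ∪ L' ⊆ Finset.Ico p (p + m) := by
      intro x hx
      simp only [hR, hL, hL', Finset.mem_union, Finset.mem_filter, Finset.mem_image,
        Finset.mem_range, Finset.mem_Ico] at hx ⊢
      rcases hx with hx | ⟨y, hy, rfl⟩ <;> omega
    simpa using Finset.card_le_card this
  have hI : (R ∩ L').card ≤ ∑ i ∈ Finset.range N, ∑ j ∈ Finset.range N,
      if i < p ∧ p ≤ j ∧ j = i + m ∧ P i ∧ P j then 1 else 0 := by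
    rw [Finset.sum_comm, Finset.card_eq_sum_ones]
    refine (Finset.sum_le_sum (f := fun _ => 1) (g := fun j => ∑ i ∈ Finset.range N,
      if i < p ∧ p ≤ j ∧ j = i + m ∧ P i ∧ P j then 1 else 0) ?_).trans
      (Finset.sum_le_sum_of_subset (f := fun j => ∑ i ∈ Finset.range N,
      if i < p ∧ p ≤ j ∧ j = i + m ∧ P i ∧ P j then 1 else 0) ?_)
    · intro j hj
      simp only [hR, hL, hL', Finset.mem_inter, Finset.mem_filter, Finset.mem_image,
        Finset.mem_range] at hj
      obtain ⟨⟨h1, h2, h3, h4⟩, i, ⟨hi, hip, hpi, hPi⟩, rfl⟩ := hj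
      refine le_trans ?_ (Finset.single_le_sum (fun _ _ => Nat.zero_le _)
        (Finset.mem_range.2 hi))
      simp [hip, hpi, hPi, h4]
    · intro j hj
      simp only [hR, Finset.mem_inter, Finset.mem_filter] at hj
      exact hj.1.1
  have := Finset.card_union_add_card_inter R L'
  rw [← Finset.card_filter, ← Finset.card_filter, ← hR, ← hL]
  omega

/-- The discrete rearrangement inequality: sorting a finite sequence does not decrease the number
of close pairs. Equidistribution of `u` and `v` is expressed by equality of all sums `∑ f (u i)`.
The induction deletes a maximal entry from both sequences. -/
lemma closePairs_le (k : ℤ) (m : ℕ) (N : ℕ) : ∀ (u v : ℕ → ℤ),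
    (∀ i j, i ≤ j → j < N → v i ≤ v j) →
    (∀ f : ℤ → ℕ, ∑ i ∈ Finset.range N, f (u i) = ∑ i ∈ Finset.range N, f (v i)) →
    closePairs k m N u ≤ closePairs k m N v := by
  induction N with
  | zero => intro u v _ _; simp [closePairs]
  | succ N ih =>
    intro u v hv huv
    set M := v N with hM
    obtain ⟨p, hp, hpM⟩ : ∃ p, p ≤ N ∧ u p = M := by
      by_contra! hcon
      have h1 := huv fun z => if z = M then 1 else 0
      rw [Finset.sum_eq_zero] at h1
      · rw [Finset.sum_range_succ] at h1
        simp [hM] at h1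
      · intro i hi
        simp [hcon i (by simpa [Nat.lt_succ_iff] using hi)]
    have huM : ∀ i, i < N + 1 → u i ≤ M := by
      intro i hi
      have h1 := huv fun z => if M < z then 1 else 0
      rw [Finset.sum_eq_zero (s := Finset.range (N + 1)) (f := fun i => if M < v i then 1 else 0)]
        at h1
      · have := (Finset.sum_eq_zero_iff.1 h1) i (Finset.mem_range.2 hi)
        simpa using this
      · intro j hj
        have := hv j N (by simpa [Nat.lt_succ_iff] using hj) (by omega)
        simp [this, hM]
    set u' : ℕ → ℤ := fun i => u (skip p i) with hu'
    have hu'M : ∀ i, i < N → u' i ≤ M := fun i hi => huM _ (by unfold skip; split_ifs <;> omega)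
    have huv' : ∀ f : ℤ → ℕ,
        ∑ i ∈ Finset.range N, f (u' i) = ∑ i ∈ Finset.range N, f (v i) := by
      intro f
      have h1 := huv f
      rw [sum_range_skip (fun i => f (u i)) p N hp, Finset.sum_range_succ, hpM, ← hM] at h1
      simp only [hu']
      omega
    have ih' := ih u' v (fun i j hij hj => hv i j hij (by omega)) huv'
    -- the pairs among the remaining entries, before and after the deletion
    set Cr := ∑ i ∈ Finset.range N, ∑ j ∈ Finset.range N,
      (if i < p ∧ p ≤ j ∧ j = i + m ∧ |u' j - u' i| ≤ k then 1 else 0) with hCr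
    have hrem : (∑ i ∈ Finset.range N, ∑ j ∈ Finset.range N,
        if skip p i < skip p j ∧ skip p j ≤ skip p i + m ∧ |u' j - u' i| ≤ k then 1 else 0) + Cr =
        closePairs k m N u' := by
      simp only [hCr, closePairs, ← Finset.sum_add_distrib]
      refine Finset.sum_congr rfl fun i _ => Finset.sum_congr rfl fun j _ => ?_
      by_cases hg : |u' j - u' i| ≤ k
      · simp only [hg, and_true, skip]
        split_ifs <;> omega
      · simp [hg]
    set Nb := (∑ i ∈ Finset.range N, if p ≤ i ∧ i + 1 ≤ p + m ∧ M - k ≤ u' i then 1 else 0) +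
      (∑ i ∈ Finset.range N, if i < p ∧ p ≤ i + m ∧ M - k ≤ u' i then 1 else 0) with hNb
    have hGu : closePairs k m (N + 1) u + Cr = closePairs k m N u' + Nb := by
      rw [← hrem, closePairs, sum_range_skip _ p N hp, sum_range_skip _ p N hp]
      simp only [sum_range_skip _ p N hp, Finset.sum_add_distrib]
      have e1 : (∑ i ∈ Finset.range N,
          if p < skip p i ∧ skip p i ≤ p + m ∧ |u (skip p i) - u p| ≤ k then 1 else 0) =
          ∑ i ∈ Finset.range N, if p ≤ i ∧ i + 1 ≤ p + m ∧ M - k ≤ u' i then 1 else 0 := by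
        refine Finset.sum_congr rfl fun i hi => ?_
        have h1 := hu'M i (Finset.mem_range.1 hi)
        have h2 : |u' i - M| ≤ k ↔ M - k ≤ u' i := by rw [abs_le]; omega
        simp only [hpM]
        change (if p < skip p i ∧ skip p i ≤ p + m ∧ |u' i - M| ≤ k then 1 else 0) = _
        simp only [h2, skip]
        split_ifs <;> omega
      have e2 : (∑ i ∈ Finset.range N,
          if skip p i < p ∧ p ≤ skip p i + m ∧ |u p - u (skip p i)| ≤ k then 1 else 0) =
          ∑ i ∈ Finset.range N, if i < p ∧ p ≤ i + m ∧ M - k ≤ u' i then 1 else 0 := by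
        refine Finset.sum_congr rfl fun i hi => ?_
        have h1 := hu'M i (Finset.mem_range.1 hi)
        have h2 : |M - u' i| ≤ k ↔ M - k ≤ u' i := by rw [abs_le]; omega
        simp only [hpM]
        change (if skip p i < p ∧ p ≤ skip p i + m ∧ |M - u' i| ≤ k then 1 else 0) = _
        simp only [h2, skip]
        split_ifs <;> omega
      rw [e1, e2]
      simp only [lt_irrefl, false_and, if_false]
      simp only [hNb, hu']
      omega
    have hNb1 : Nb ≤ ∑ i ∈ Finset.range N, if M - k ≤ u' i then 1 else 0 := by
      rw [hNb, ← Finset.sum_add_distrib]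
      refine Finset.sum_le_sum fun i _ => ?_
      split_ifs <;> omega
    have hNb2 : Nb ≤ m + Cr := by
      refine (window_count (fun i => M - k ≤ u' i) p m N).trans ?_
      refine Nat.add_le_add_left (Finset.sum_le_sum fun i hi => Finset.sum_le_sum fun j hj => ?_) m
      have h1 := hu'M i (Finset.mem_range.1 hi)
      have h2 := hu'M j (Finset.mem_range.1 hj)
      have h3 : M - k ≤ u' i ∧ M - k ≤ u' j → |u' j - u' i| ≤ k := by rw [abs_le]; omega
      split_ifs <;> omega
    set Nv := ∑ i ∈ Finset.range N, (if N ≤ i + m ∧ M - k ≤ v i then 1 else 0) with hNv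
    have hGv : closePairs k m N v + Nv ≤ closePairs k m (N + 1) v := by
      rw [closePairs, closePairs, Finset.sum_range_succ _ N]
      refine le_trans ?_ (Nat.le_add_right _ _)
      rw [hNv, ← Finset.sum_add_distrib]
      refine Finset.sum_le_sum fun i hi => ?_
      rw [Finset.sum_range_succ _ N]
      refine Nat.add_le_add_left ?_ _
      have hi' := Finset.mem_range.1 hi
      have h1 := hv i N hi'.le (by omega)
      have h3 : M - k ≤ v i → |v N - v i| ≤ k := by rw [abs_le]; omega
      split_ifs <;> omega
    -- the close neighbours of the last entry of `v` are as many as possible: by monotonicity the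
    -- window and the set `{i | M - k ≤ v i}` are both final segments, hence nested
    have hNv' : Nv ≥ m ∨ Nv ≥ ∑ i ∈ Finset.range N, if M - k ≤ v i then 1 else 0 := by
      by_cases hc : ∀ i < N, M - k ≤ v i → N ≤ i + m
      · right
        refine Finset.sum_le_sum fun i hi => ?_
        have := hc i (Finset.mem_range.1 hi)
        split_ifs <;> omega
      · left
        push Not at hc
        obtain ⟨i₀, hi₀, hP, hlt⟩ := hc
        rw [hNv, ← Finset.card_filter]
        have : Finset.Ico (N - m) N ⊆
            (Finset.range N).filter fun i => N ≤ i + m ∧ M - k ≤ v i := by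
          intro x hx
          simp only [Finset.mem_Ico, Finset.mem_filter, Finset.mem_range] at hx ⊢
          have := hv i₀ x (by omega) (by omega)
          omega
        have := Finset.card_le_card this
        rw [Nat.card_Ico] at this
        omega
    have hK := huv' fun z => if M - k ≤ z then 1 else 0
    omega

/-- Weighted form: sorting does not increase the total weight of far pairs, for a nonincreasing
weight of the distance. Abel summation writes the weight as a nonnegative combination of
indicators of `{d ≤ m}`. -/
lemma sum_far_le (k : ℤ) (N : ℕ) (w : ℕ → ℝ) (hw : Antitone w) (hw0 : ∀ d, 0 ≤ w d)
    (u v : ℕ → ℤ) (hv : ∀ i j, i ≤ j → j < N → v i ≤ v j)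
    (huv : ∀ f : ℤ → ℕ, ∑ i ∈ Finset.range N, f (u i) = ∑ i ∈ Finset.range N, f (v i)) :
    (∑ i ∈ Finset.range N, ∑ j ∈ Finset.range N,
      if i < j ∧ k < |v j - v i| then w (j - i) else 0) ≤
    ∑ i ∈ Finset.range N, ∑ j ∈ Finset.range N,
      if i < j ∧ k < |u j - u i| then w (j - i) else 0 := by
  set B : ℕ → (ℕ → ℤ) → ℝ := fun m u => ∑ i ∈ Finset.range N, ∑ j ∈ Finset.range N,
    if i < j ∧ j ≤ i + m ∧ k < |u j - u i| then 1 else 0 with hB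
  have hBle : ∀ m, B m v ≤ B m u := by
    intro m
    have key : ∀ u : ℕ → ℤ, B m u + (closePairs k m N u : ℝ) =
        ∑ i ∈ Finset.range N, ∑ j ∈ Finset.range N, if i < j ∧ j ≤ i + m then 1 else 0 := by
      intro u
      simp only [hB, closePairs, Nat.cast_sum, ← Finset.sum_add_distrib]
      refine Finset.sum_congr rfl fun i _ => Finset.sum_congr rfl fun j _ => ?_
      by_cases h1 : i < j ∧ j ≤ i + m
      · rcases lt_or_ge k |u j - u i| with h2 | h2
        · simp [h1.1, h1.2, h2]
        · simp [h1.1, h1.2, h2]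
      · have h2 : ∀ Q, ¬ (i < j ∧ j ≤ i + m ∧ Q) := fun Q hQ => h1 ⟨hQ.1, hQ.2.1⟩
        simp [h1, h2]
    have h1 := key u
    have h2 := key v
    have h3 : (closePairs k m N u : ℝ) ≤ closePairs k m N v := by
      exact_mod_cast closePairs_le k m N u v hv huv
    linarith
  -- Abel summation
  have abel : ∀ d, d ≤ N →
      w d = w N + ∑ m ∈ Finset.range N, if d ≤ m then w m - w (m + 1) else 0 := by
    intro d hd
    have h1 := Finset.sum_Ico_sub (f := w) hd
    rw [← Finset.sum_filter]
    have h2 : (Finset.range N).filter (fun m => d ≤ m) = Finset.Ico d N := by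
      ext x; simp [and_comm]
    rw [h2]
    have h3 : ∑ m ∈ Finset.Ico d N, (w m - w (m + 1)) = - ∑ m ∈ Finset.Ico d N, (w (m + 1) - w m) := by
      rw [← Finset.sum_neg_distrib]
      exact Finset.sum_congr rfl fun _ _ => by ring
    rw [h3, h1]
    ring
  have expand : ∀ u : ℕ → ℤ, (∑ i ∈ Finset.range N, ∑ j ∈ Finset.range N,
      if i < j ∧ k < |u j - u i| then w (j - i) else 0) =
      w N * B N u + ∑ m ∈ Finset.range N, (w m - w (m + 1)) * B m u := by
    intro u
    simp only [hB, Finset.mul_sum]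
    rw [Finset.sum_comm (s := Finset.range N) (t := Finset.range N)
      (f := fun m i => ∑ j ∈ Finset.range N, (w m - w (m + 1)) * _), ← Finset.sum_add_distrib]
    refine Finset.sum_congr rfl fun i hi => ?_
    rw [Finset.sum_comm, ← Finset.sum_add_distrib]
    refine Finset.sum_congr rfl fun j hj => ?_
    have hj' := Finset.mem_range.1 hj
    by_cases h1 : i < j ∧ k < |u j - u i|
    · obtain ⟨h1, h2⟩ := h1
      have h4 : j ≤ i + N := by omega
      simp only [h1, h2, h4, and_true, true_and, if_true, mul_one, mul_ite, mul_zero]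
      rw [abel (j - i) (by omega)]
      congr 1
      refine Finset.sum_congr rfl fun m _ => ?_
      simp [add_comm]
    · have h2 : ∀ Q, ¬ (i < j ∧ Q ∧ k < |u j - u i|) := fun Q hQ => h1 ⟨hQ.1, hQ.2.2⟩
      simp [h1, h2]
  rw [expand, expand]
  refine add_le_add (mul_le_mul_of_nonneg_left (hBle N) (hw0 N))
    (Finset.sum_le_sum fun m _ => mul_le_mul_of_nonneg_left (hBle m) ?_)
  exact sub_nonneg.2 (hw (Nat.le_succ m))

/-! ### Sampled sequences -/

lemma phik_int (k : ℕ) (z : ℤ) : phik (k : ℝ) (z : ℝ) = if (k : ℤ) < z then 1 else 0 := by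
  unfold phik
  have : ((z : ℝ) ≤ (k : ℝ)) ↔ ¬ ((k : ℤ) < z) := by rw [not_lt]; exact_mod_cast Iff.rfl
  simp only [this, ite_not]

/-- The discrete inequality for sample points `a + i h + s` and `a + i h + t` with a fixed pair of
offsets `s, t ∈ [0, h)`: the pairs `i < j` and `j < i` each carry a nonincreasing weight of the
index distance. -/
lemma sum_phik_le (k N : ℕ) (C : ℝ → ℝ) (hC : Antitone C) (hC0 : ∀ t, 0 ≤ C t)
    (a h s t : ℝ) (hs : s ∈ Ico 0 h) (ht : t ∈ Ico 0 h)
    (u v : ℕ → ℤ) (hv : ∀ i j, i ≤ j → j < N → v i ≤ v j)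
    (huv : ∀ f : ℤ → ℕ, ∑ i ∈ Finset.range N, f (u i) = ∑ i ∈ Finset.range N, f (v i)) :
    (∑ i ∈ Finset.range N, ∑ j ∈ Finset.range N,
      phik (k : ℝ) ((|v j - v i| : ℤ) : ℝ) * C |(a + j * h + t) - (a + i * h + s)|) ≤
    ∑ i ∈ Finset.range N, ∑ j ∈ Finset.range N,
      phik (k : ℝ) ((|u j - u i| : ℤ) : ℝ) * C |(a + j * h + t) - (a + i * h + s)| := by
  have hh : 0 < h := hs.1.trans_lt hs.2
  have anti : ∀ r : ℝ, Antitone fun d : ℕ => C (d * h + r) := by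
    intro r d e hde
    apply hC
    have : (d : ℝ) ≤ e := by exact_mod_cast hde
    nlinarith
  have split : ∀ u : ℕ → ℤ, (∑ i ∈ Finset.range N, ∑ j ∈ Finset.range N,
      phik (k : ℝ) ((|u j - u i| : ℤ) : ℝ) * C |(a + j * h + t) - (a + i * h + s)|) =
      (∑ i ∈ Finset.range N, ∑ j ∈ Finset.range N,
        if i < j ∧ (k : ℤ) < |u j - u i| then C ((j - i : ℕ) * h + (t - s)) else 0) +
      ∑ i ∈ Finset.range N, ∑ j ∈ Finset.range N,
        if i < j ∧ (k : ℤ) < |u j - u i| then C ((j - i : ℕ) * h + (s - t)) else 0 := by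
    intro u
    rw [Finset.sum_comm (f := fun i j => if i < j ∧ (k : ℤ) < |u j - u i| then
      C ((j - i : ℕ) * h + (s - t)) else 0), ← Finset.sum_add_distrib]
    refine Finset.sum_congr rfl fun i _ => ?_
    rw [← Finset.sum_add_distrib]
    refine Finset.sum_congr rfl fun j _ => ?_
    rw [phik_int, abs_sub_comm (u i) (u j)]
    rcases lt_trichotomy i j with hij | rfl | hij
    · have h1 : ((i : ℝ) + 1) ≤ j := by exact_mod_cast hij
      have h2 : (a + j * h + t) - (a + i * h + s) = ((j - i : ℕ) : ℝ) * h + (t - s) := by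
        rw [Nat.cast_sub hij.le]; ring
      have h3 : 0 ≤ (a + j * h + t) - (a + i * h + s) := by nlinarith [hs.1, hs.2, ht.1, ht.2]
      rw [abs_of_nonneg h3, h2]
      simp [hij, hij.not_gt]
    · simp
    · have h1 : ((j : ℝ) + 1) ≤ i := by exact_mod_cast hij
      have h2 : -((a + j * h + t) - (a + i * h + s)) = ((i - j : ℕ) : ℝ) * h + (s - t) := by
        rw [Nat.cast_sub hij.le]; ring
      have h3 : (a + j * h + t) - (a + i * h + s) ≤ 0 := by nlinarith [hs.1, hs.2, ht.1, ht.2]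
      rw [abs_of_nonpos h3, h2]
      simp [hij, hij.not_gt]
  rw [split, split]
  exact add_le_add
    (sum_far_le k N (fun d => C (d * h + (t - s))) (anti _) (fun _ => hC0 _) u v hv huv)
    (sum_far_le k N (fun d => C (d * h + (s - t))) (anti _) (fun _ => hC0 _) u v hv huv)

/-- Every finite sequence has a sorted rearrangement. -/
lemma exists_sorted (N : ℕ) (u : ℕ → ℤ) : ∃ v : ℕ → ℤ, (∀ i j, i ≤ j → j < N → v i ≤ v j) ∧
    (∀ f : ℤ → ℕ, ∑ i ∈ Finset.range N, f (u i) = ∑ i ∈ Finset.range N, f (v i)) ∧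
    ∀ i < N, ∃ j, v i = u j := by
  set w : Fin N → ℤ := fun i => u i with hw
  refine ⟨fun i => if h : i < N then w (Tuple.sort w ⟨i, h⟩) else 0, ?_, ?_, ?_⟩
  · intro i j hij hj
    simp only [hij.trans_lt hj, hj, dif_pos]
    exact Tuple.monotone_sort w (by simpa using hij)
  · intro f
    rw [Finset.sum_range, Finset.sum_range]
    simp only [Fin.is_lt, dif_pos]
    exact (Equiv.sum_comp (Tuple.sort w) (fun i => f (w i))).symm
  · intro i hi
    exact ⟨(Tuple.sort w ⟨i, hi⟩ : Fin N), by simp [hi, hw]⟩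

/-! ### Step functions -/

/-- The function on `[a, ∞)` equal to `g i` on the cell `[a + i h, a + (i + 1) h)`. -/
noncomputable def stepFn (a h : ℝ) (g : ℕ → ℤ) (x : ℝ) : ℤ := g ⌊(x - a) / h⌋₊

lemma measurable_stepFn (a h : ℝ) (g : ℕ → ℤ) : Measurable (stepFn a h g) := by
  unfold stepFn
  exact (measurable_from_nat (f := g)).comp
    (Nat.measurable_floor.comp ((measurable_id.sub_const a).div_const h))

lemma stepFn_cell {a h s : ℝ} (g : ℕ → ℤ) (i : ℕ) (hs : s ∈ Ico 0 h) :
    stepFn a h g (a + i * h + s) = g i := by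
  have hh : 0 < h := hs.1.trans_lt hs.2
  unfold stepFn
  congr 1
  rw [Nat.floor_eq_iff (div_nonneg (by nlinarith [hs.1, (Nat.cast_nonneg i : (0 : ℝ) ≤ i)]) hh.le),
    le_div_iff₀ hh, div_lt_iff₀ hh]
  constructor <;> nlinarith [hs.1, hs.2]

lemma setLIntegral_Ico_shift (φ : ℝ → ℝ≥0∞) (A h : ℝ) :
    ∫⁻ x in Ico A (A + h), φ x = ∫⁻ s in Ico 0 h, φ (A + s) := by
  rw [← lintegral_indicator measurableSet_Ico, ← lintegral_indicator measurableSet_Ico,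
    ← lintegral_add_left_eq_self _ A]
  refine lintegral_congr fun s => ?_
  by_cases hs : s ∈ Ico 0 h
  · have : A + s ∈ Ico A (A + h) := ⟨by linarith [hs.1], by linarith [hs.2]⟩
    simp [indicator_of_mem, hs, this]
  · have : A + s ∉ Ico A (A + h) := fun h' => hs ⟨by linarith [h'.1], by linarith [h'.2]⟩
    simp [indicator_of_notMem, hs, this]

lemma lintegral_cells (φ : ℝ → ℝ≥0∞) (a h : ℝ) (hh : 0 ≤ h) (N : ℕ) :
    ∫⁻ x in Ioo a (a + N * h), φ x =
      ∑ i ∈ Finset.range N, ∫⁻ s in Ico 0 h, φ (a + i * h + s) := by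
  rw [setLIntegral_congr Ioo_ae_eq_Ico]
  induction N with
  | zero => simp
  | succ n ih =>
    have h1 : a + ((n + 1 : ℕ) : ℝ) * h = a + n * h + h := by push_cast; ring
    have h2 : Ico a (a + n * h + h) = Ico a (a + n * h) ∪ Ico (a + n * h) (a + n * h + h) :=
      (Ico_union_Ico_eq_Ico (by nlinarith [(Nat.cast_nonneg n : (0 : ℝ) ≤ n)]) (by linarith)).symm
    have h3 : Disjoint (Ico a (a + n * h)) (Ico (a + n * h) (a + n * h + h)) := by
      rw [Set.disjoint_left]
      intro x hx hx'
      exact absurd hx.2 (not_lt.2 hx'.1)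
    rw [h1, h2, lintegral_union measurableSet_Ico h3, ih, Finset.sum_range_succ,
      setLIntegral_Ico_shift]

/-! ### Hostility of step functions -/

lemma phik_nonneg (k t : ℝ) : 0 ≤ phik k t := by unfold phik; split_ifs <;> simp

lemma phik_le_one (k t : ℝ) : phik k t ≤ 1 := by unfold phik; split_ifs <;> simp

lemma measurable_phik (k : ℝ) : Measurable (phik k) :=
  Measurable.ite measurableSet_Iic measurable_const measurable_const

lemma measurable_integrand (k : ℕ) (C : ℝ → ℝ) (hC : Measurable C) (u : ℝ → ℤ)
    (hu : Measurable u) : Measurable fun z : ℝ × ℝ =>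
      ENNReal.ofReal (phik (k : ℝ) ((|u z.2 - u z.1| : ℤ) : ℝ) * C |z.2 - z.1|) := by
  have h1 : Measurable fun z : ℝ × ℝ => ((|u z.2 - u z.1| : ℤ) : ℝ) := by
    fun_prop
  have h2 : Measurable fun z : ℝ × ℝ => C |z.2 - z.1| :=
    hC.comp (continuous_abs.measurable.comp (measurable_snd.sub measurable_fst))
  exact (((measurable_phik _).comp h1).mul h2).ennreal_ofReal

/-- Splitting both variables by cells and offsets `s, t ∈ [0, h)` turns the hostility of a step
function into an average over `(s, t)` of the discrete sums of `sum_phik_le`. -/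
lemma hostility_stepFn (a h : ℝ) (hh : 0 ≤ h) (N k : ℕ) (C : ℝ → ℝ) (hC : Measurable C)
    (hC0 : ∀ t, 0 ≤ C t) (g : ℕ → ℤ) :
    semiDiscreteHostility a (a + N * h) k C (stepFn a h g) =
      ∫⁻ s in Ico 0 h, ∫⁻ t in Ico 0 h,
        ENNReal.ofReal (∑ i ∈ Finset.range N, ∑ j ∈ Finset.range N,
          phik (k : ℝ) ((|g j - g i| : ℤ) : ℝ) * C |(a + j * h + t) - (a + i * h + s)|) := by
  have meas : ∀ i j : ℕ, Measurable fun z : ℝ × ℝ => ENNReal.ofReal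
      (phik (k : ℝ) ((|g j - g i| : ℤ) : ℝ) * C |(a + j * h + z.2) - (a + i * h + z.1)|) := by
    intro i j
    have h1 : Measurable fun z : ℝ × ℝ => |(a + j * h + z.2) - (a + i * h + z.1)| := by fun_prop
    exact ((hC.comp h1).const_mul _).ennreal_ofReal
  have meas1 : ∀ (i j : ℕ) (s : ℝ), Measurable fun t : ℝ => ENNReal.ofReal
      (phik (k : ℝ) ((|g j - g i| : ℤ) : ℝ) * C |(a + j * h + t) - (a + i * h + s)|) :=
    fun i j s => (meas i j).comp measurable_prodMk_left
  unfold semiDiscreteHostility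
  simp only [lintegral_cells _ a h hh N]
  have e1 : ∀ s t, ENNReal.ofReal (∑ i ∈ Finset.range N, ∑ j ∈ Finset.range N,
      phik (k : ℝ) ((|g j - g i| : ℤ) : ℝ) * C |(a + j * h + t) - (a + i * h + s)|) =
      ∑ i ∈ Finset.range N, ∑ j ∈ Finset.range N, ENNReal.ofReal
        (phik (k : ℝ) ((|g j - g i| : ℤ) : ℝ) * C |(a + j * h + t) - (a + i * h + s)|) := by
    intro s t
    rw [ENNReal.ofReal_sum_of_nonneg]
    · refine Finset.sum_congr rfl fun i _ => ?_
      rw [ENNReal.ofReal_sum_of_nonneg]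
      exact fun j _ => mul_nonneg (phik_nonneg _ _) (hC0 _)
    · exact fun i _ => Finset.sum_nonneg fun j _ => mul_nonneg (phik_nonneg _ _) (hC0 _)
  simp only [e1]
  have e2 : ∀ s, (∫⁻ t in Ico 0 h, ∑ i ∈ Finset.range N, ∑ j ∈ Finset.range N, ENNReal.ofReal
        (phik (k : ℝ) ((|g j - g i| : ℤ) : ℝ) * C |(a + j * h + t) - (a + i * h + s)|)) =
      ∑ i ∈ Finset.range N, ∑ j ∈ Finset.range N, ∫⁻ t in Ico 0 h, ENNReal.ofReal
        (phik (k : ℝ) ((|g j - g i| : ℤ) : ℝ) * C |(a + j * h + t) - (a + i * h + s)|) := by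
    intro s
    rw [lintegral_finsetSum _ fun i _ => Finset.measurable_sum _ fun j _ => meas1 i j s]
    exact Finset.sum_congr rfl fun i _ => lintegral_finsetSum _ fun j _ => meas1 i j s
  simp only [e2]
  rw [lintegral_finsetSum _ fun i _ => Finset.measurable_sum _ fun j _ =>
    (meas i j).lintegral_prod_right']
  refine Finset.sum_congr rfl fun i _ => setLIntegral_congr_fun measurableSet_Ico fun s hs => ?_
  refine Finset.sum_congr rfl fun j _ => setLIntegral_congr_fun measurableSet_Ico fun t ht => ?_
  simp only [stepFn_cell g _ hs, stepFn_cell g _ ht]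

lemma hostility_stepFn_sorted_le (a h : ℝ) (hh : 0 ≤ h) (N k : ℕ) (C : ℝ → ℝ) (hC : Antitone C)
    (hC0 : ∀ t, 0 ≤ C t) (u v : ℕ → ℤ) (hv : ∀ i j, i ≤ j → j < N → v i ≤ v j)
    (huv : ∀ f : ℤ → ℕ, ∑ i ∈ Finset.range N, f (u i) = ∑ i ∈ Finset.range N, f (v i)) :
    semiDiscreteHostility a (a + N * h) k C (stepFn a h v) ≤
      semiDiscreteHostility a (a + N * h) k C (stepFn a h u) := by
  rw [hostility_stepFn a h hh N k C hC.measurable hC0,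
    hostility_stepFn a h hh N k C hC.measurable hC0]
  refine setLIntegral_mono' measurableSet_Ico fun s hs =>
    setLIntegral_mono' measurableSet_Ico fun t ht => ENNReal.ofReal_le_ofReal ?_
  exact sum_phik_le k N C hC hC0 a h s t hs ht u v hv huv

lemma stepFn_superlevel (a h : ℝ) (hh : 0 ≤ h) (N : ℕ) (u v : ℕ → ℤ)
    (huv : ∀ f : ℤ → ℕ, ∑ i ∈ Finset.range N, f (u i) = ∑ i ∈ Finset.range N, f (v i)) (j : ℤ) :
    (volume.restrict (Ioo a (a + N * h))) {x | j ≤ stepFn a h u x} =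
      (volume.restrict (Ioo a (a + N * h))) {x | j ≤ stepFn a h v x} := by
  have key : ∀ g : ℕ → ℤ, (volume.restrict (Ioo a (a + N * h))) {x | j ≤ stepFn a h g x} =
      ((∑ i ∈ Finset.range N, if j ≤ g i then 1 else 0 : ℕ) : ℝ≥0∞) * ENNReal.ofReal h := by
    intro g
    have hm : MeasurableSet {x | j ≤ stepFn a h g x} :=
      measurable_stepFn a h g (measurableSet_Ici : MeasurableSet (Ici j))
    rw [← lintegral_indicator_one hm, lintegral_cells _ a h hh N, Nat.cast_sum, Finset.sum_mul]
    refine Finset.sum_congr rfl fun i _ => ?_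
    rw [setLIntegral_congr_fun (g := fun _ => ((if j ≤ g i then 1 else 0 : ℕ) : ℝ≥0∞))
      measurableSet_Ico]
    · simp
    · intro s hs
      simp [indicator_apply, stepFn_cell g _ hs]
  rw [key, key, huv fun z => if j ≤ z then 1 else 0]

lemma monotoneOn_stepFn (a h : ℝ) (hh : 0 < h) (N : ℕ) (v : ℕ → ℤ)
    (hv : ∀ i j, i ≤ j → j < N → v i ≤ v j) :
    MonotoneOn (stepFn a h v) (Ioo a (a + N * h)) := by
  intro x hx y hy hxy
  refine hv _ _ (Nat.floor_mono (by gcongr)) ?_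
  rw [Nat.floor_lt (div_nonneg (by linarith [hy.1]) hh.le), div_lt_iff₀ hh]
  linarith [hy.2]

/-! ### Stability under small perturbations -/

/-- A bounded cost makes the hostility continuous with respect to convergence in measure. -/
lemma hostility_le_add (a b : ℝ) (k : ℕ) (C : ℝ → ℝ) (hC0 : ∀ t, 0 ≤ C t)
    (K : ℝ) (hCK : ∀ t, C t ≤ K) (u w : ℝ → ℤ) (hu : Measurable u) (hw : Measurable w) :
    semiDiscreteHostility a b k C u ≤ semiDiscreteHostility a b k C w +
      2 * ENNReal.ofReal K * ENNReal.ofReal (b - a) *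
        (volume.restrict (Ioo a b)) {x | u x ≠ w x} := by
  set μ := volume.restrict (Ioo a b) with hμ
  set D := {x | u x ≠ w x} with hD
  have hDm : MeasurableSet D := (measurableSet_eq_fun hu hw).compl
  have hμ1 : μ univ = ENNReal.ofReal (b - a) := by simp [hμ]
  set χ : ℝ → ℝ≥0∞ := D.indicator fun _ => ENNReal.ofReal K with hχ
  have hχm : Measurable χ := measurable_const.indicator hDm
  have hχi : ∫⁻ x, χ x ∂μ = ENNReal.ofReal K * μ D := by
    rw [hχ, lintegral_indicator_const hDm]
  have pt : ∀ x y, ENNReal.ofReal (phik (k : ℝ) ((|u y - u x| : ℤ) : ℝ) * C |y - x|) ≤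
      ENNReal.ofReal (phik (k : ℝ) ((|w y - w x| : ℤ) : ℝ) * C |y - x|) + χ y + χ x := by
    intro x y
    have h0 : ENNReal.ofReal (phik (k : ℝ) ((|u y - u x| : ℤ) : ℝ) * C |y - x|) ≤
        ENNReal.ofReal K := by
      refine ENNReal.ofReal_le_ofReal ?_
      have := mul_le_mul_of_nonneg_right (phik_le_one (k : ℝ) ((|u y - u x| : ℤ) : ℝ))
        (hC0 |y - x|)
      linarith [hCK |y - x|]
    by_cases hx : x ∈ D
    · refine h0.trans ?_
      simp [hχ, hx]
    by_cases hy : y ∈ D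
    · refine h0.trans ?_
      simp only [hχ, indicator_of_mem hy]
      exact le_add_right le_add_self
    · replace hx : u x = w x := not_not.1 hx
      replace hy : u y = w y := not_not.1 hy
      rw [hx, hy, add_assoc]
      exact le_self_add
  calc semiDiscreteHostility a b k C u
      ≤ ∫⁻ x, ∫⁻ y, (ENNReal.ofReal (phik (k : ℝ) ((|w y - w x| : ℤ) : ℝ) * C |y - x|) + χ y
          + χ x) ∂μ ∂μ := lintegral_mono fun x => lintegral_mono fun y => pt x y
    _ = ∫⁻ x, (∫⁻ y, ENNReal.ofReal (phik (k : ℝ) ((|w y - w x| : ℤ) : ℝ) * C |y - x|) ∂μ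
          + (ENNReal.ofReal K * μ D + χ x * μ univ)) ∂μ := by
        refine lintegral_congr fun x => ?_
        rw [lintegral_add_right _ measurable_const, lintegral_add_right _ hχm, hχi,
          lintegral_const, add_assoc]
    _ = semiDiscreteHostility a b k C w + (ENNReal.ofReal K * μ D * μ univ
          + ENNReal.ofReal K * μ D * μ univ) := by
        rw [lintegral_add_right _ (show Measurable fun x => ENNReal.ofReal K * μ D + χ x * μ univ from
            measurable_const.add (hχm.mul_const _)),
          lintegral_add_left measurable_const, lintegral_const, lintegral_mul_const _ hχm, hχi]
        rfl
    _ = _ := by rw [hμ1]; ring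

/-- Monotone functions are determined up to null sets by the measures of their superlevel sets,
quantitatively: superlevel sets of monotone functions are nested. -/
lemma monotone_diff (a b : ℝ) (v w : ℝ → ℤ) (hv : Measurable v) (hw : Measurable w)
    (hvm : MonotoneOn v (Ioo a b)) (hwm : MonotoneOn w (Ioo a b)) (m M : ℤ)
    (hvb : ∀ x ∈ Ioo a b, v x ∈ Icc m M) (hwb : ∀ x ∈ Ioo a b, w x ∈ Icc m M) (ε : ℝ≥0∞)
    (h1 : ∀ j, (volume.restrict (Ioo a b)) {x | j ≤ v x} ≤
      (volume.restrict (Ioo a b)) {x | j ≤ w x} + ε)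
    (h2 : ∀ j, (volume.restrict (Ioo a b)) {x | j ≤ w x} ≤
      (volume.restrict (Ioo a b)) {x | j ≤ v x} + ε) :
    (volume.restrict (Ioo a b)) {x | v x ≠ w x} ≤ (Finset.Icc m M).card * (2 * ε) := by
  set μ := volume.restrict (Ioo a b) with hμ
  have hI : ∀ᵐ x ∂μ, x ∈ Ioo a b := ae_restrict_mem measurableSet_Ioo
  have one : ∀ v w : ℝ → ℤ, Measurable v → Measurable w → MonotoneOn v (Ioo a b) →
      MonotoneOn w (Ioo a b) → ∀ j, μ {x | j ≤ v x} ≤ μ {x | j ≤ w x} + ε →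
      μ ({x | j ≤ v x} \ {x | j ≤ w x}) ≤ ε := by
    intro v w hv hw hvm hwm j hj
    have hB : MeasurableSet {x | j ≤ w x} := hw (measurableSet_Ici : MeasurableSet (Ici j))
    by_cases hs : ∀ x ∈ Ioo a b, j ≤ v x → j ≤ w x
    · have : μ ({x | j ≤ v x} \ {x | j ≤ w x}) = 0 := by
        rw [measure_eq_zero_iff_ae_notMem]
        filter_upwards [hI] with x hx hx'
        exact hx'.2 (hs x hx hx'.1)
      simp [this]
    · push Not at hs
      obtain ⟨x₀, hx₀, hvx, hwx⟩ := hs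
      have hsub : ∀ y ∈ Ioo a b, j ≤ w y → j ≤ v y := by
        intro y hy hwy
        rcases le_total x₀ y with h | h
        · exact hvx.trans (hvm hx₀ hy h)
        · have := hwm hy hx₀ h
          omega
      have e : μ ({x | j ≤ v x} ∩ {x | j ≤ w x}) = μ {x | j ≤ w x} := by
        refine measure_congr ?_
        filter_upwards [hI] with y hy
        exact propext ⟨fun h => h.2, fun h => ⟨hsub y hy h, h⟩⟩
      have h3 := measure_inter_add_sdiff (μ := μ) {x | j ≤ v x} hB
      rw [e] at h3
      rw [← h3] at hj
      exact (ENNReal.add_le_add_iff_left (measure_ne_top μ _)).1 hj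
  have hsub : μ {x | v x ≠ w x} ≤ μ (⋃ j ∈ Finset.Icc m M,
      (({x | j ≤ v x} \ {x | j ≤ w x}) ∪ ({x | j ≤ w x} \ {x | j ≤ v x}))) := by
    refine measure_mono_ae ?_
    filter_upwards [hI] with x hx hne
    have hv' := hvb x hx
    have hw' := hwb x hx
    simp only [mem_Icc] at hv' hw'
    refine mem_iUnion₂.2 ?_
    rcases lt_or_gt_of_ne (show v x ≠ w x from hne) with h | h
    · exact ⟨w x, Finset.mem_Icc.2 hw', Or.inr ⟨le_refl (w x), not_le.2 h⟩⟩
    · exact ⟨v x, Finset.mem_Icc.2 hv', Or.inl ⟨le_refl (v x), not_le.2 h⟩⟩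
  refine hsub.trans ((measure_biUnion_finset_le _ _).trans ?_)
  refine (Finset.sum_le_card_nsmul _ _ (2 * ε) fun j _ => ?_).trans_eq (nsmul_eq_mul _ _)
  rw [two_mul]
  exact (measure_union_le _ _).trans (add_le_add (one v w hv hw hvm hwm j (h1 j))
    (one w v hw hv hwm hvm j (h2 j)))

/-! ### Approximation by step functions -/

/-- A bounded integer-valued measurable function is close in measure to a step function on
equal cells: sample and round a continuous `L¹`-approximation, and clamp to the range. -/
lemma exists_stepFn (a b : ℝ) (hab : a < b) (u : ℝ → ℤ) (hu : Measurable u) (m M : ℤ)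
    (hmM : m ≤ M) (hub : ∀ x ∈ Ioo a b, u x ∈ Icc m M) (ε : ℝ≥0∞) (hε : ε ≠ 0) :
    ∃ (N : ℕ) (g : ℕ → ℤ), 0 < N ∧ (∀ i, g i ∈ Icc m M) ∧
      (volume.restrict (Ioo a b)) {x | u x ≠ stepFn a ((b - a) / N) g x} ≤ ε := by
  set μ := volume.restrict (Ioo a b) with hμ
  have hI : ∀ᵐ x ∂μ, x ∈ Ioo a b := ae_restrict_mem measurableSet_Ioo
  have hum : Measurable fun x => (u x : ℝ) := by fun_prop
  set f : ℝ → ℝ := (Ioo a b).indicator fun x => (u x : ℝ) with hf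
  have hfi : Integrable f := by
    rw [hf, integrable_indicator_iff measurableSet_Ioo]
    refine Measure.integrableOn_of_bounded (M := max |(m : ℝ)| |(M : ℝ)|) (by simp)
      hum.aestronglyMeasurable ?_
    filter_upwards [hI] with x hx
    have h1 : (m : ℝ) ≤ u x := by exact_mod_cast (hub x hx).1
    have h2 : (u x : ℝ) ≤ M := by exact_mod_cast (hub x hx).2
    exact abs_le_max_abs_abs h1 h2
  obtain ⟨g, hgc, hgε, hgcont, -⟩ := hfi.exists_hasCompactSupport_lintegral_sub_le
    (ε := ENNReal.ofReal (1 / 4) * ε) (mul_ne_zero (by simp) hε)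
  have hguc : UniformContinuous g := hgc.uniformContinuous_of_continuous hgcont
  obtain ⟨δ, hδ, hgδ⟩ := Metric.uniformContinuous_iff.1 hguc (1 / 4) (by norm_num)
  obtain ⟨n, hn⟩ := exists_nat_gt ((b - a) / δ)
  have hn0 : (0 : ℝ) < n := (div_pos (sub_pos.2 hab) hδ).trans hn
  set h := (b - a) / n with hh
  have hhpos : 0 < h := div_pos (sub_pos.2 hab) hn0
  have hhδ : h < δ := by
    rw [hh, div_lt_iff₀ hn0]
    rw [div_lt_iff₀ hδ] at hn
    linarith
  refine ⟨n, fun i => max m (min M (round (g (a + i * h)))), by exact_mod_cast hn0,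
    fun i => ⟨le_max_left _ _, max_le hmM (min_le_left _ _)⟩, ?_⟩
  have hsub : μ {x | u x ≠ stepFn a h (fun i => max m (min M (round (g (a + i * h))))) x} ≤
      μ {x | ENNReal.ofReal (1 / 4) ≤ ‖f x - g x‖ₑ} := by
    refine measure_mono_ae ?_
    filter_upwards [hI] with x hx hne
    by_contra hcon
    apply hne
    have hfx : f x = u x := by rw [hf, indicator_of_mem hx]
    replace hcon : ‖f x - g x‖ₑ < ENNReal.ofReal (1 / 4) := not_le.1 hcon
    rw [hfx, Real.enorm_eq_ofReal_abs, ENNReal.ofReal_lt_ofReal_iff (by norm_num)] at hcon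
    have hx0 : 0 ≤ (x - a) / h := div_nonneg (by linarith [hx.1]) hhpos.le
    have h1 := Nat.floor_le hx0
    have h2 := Nat.lt_floor_add_one ((x - a) / h)
    rw [le_div_iff₀ hhpos] at h1
    rw [div_lt_iff₀ hhpos] at h2
    have h3 : dist x (a + (⌊(x - a) / h⌋₊ : ℝ) * h) < δ := by
      rw [Real.dist_eq, abs_lt]
      constructor <;> linarith
    have h4 := hgδ h3
    rw [Real.dist_eq] at h4
    have h5 := abs_sub_round (g (a + (⌊(x - a) / h⌋₊ : ℝ) * h))
    have hr : round (g (a + (⌊(x - a) / h⌋₊ : ℝ) * h)) = u x := by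
      rw [abs_lt] at hcon h4
      rw [abs_le] at h5
      set r := round (g (a + (⌊(x - a) / h⌋₊ : ℝ) * h))
      have h6 : (r : ℝ) < u x + 1 := by linarith [hcon.1, h4.1, h5.1]
      have h7 : (u x : ℝ) < r + 1 := by linarith [hcon.2, h4.2, h5.2]
      have h6' : r < u x + 1 := by exact_mod_cast h6
      have h7' : u x < r + 1 := by exact_mod_cast h7
      omega
    simp only [stepFn, hr]
    have := hub x hx
    rw [min_eq_right this.2, max_eq_right this.1]
  refine hsub.trans ?_
  have hmeas : Measurable fun x => ‖f x - g x‖ₑ :=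
    ((hum.indicator measurableSet_Ioo).sub hgcont.measurable).enorm
  have h1 := mul_meas_ge_le_lintegral (μ := μ) hmeas (ENNReal.ofReal (1 / 4))
  have h2 : ∫⁻ x, ‖f x - g x‖ₑ ∂μ ≤ ENNReal.ofReal (1 / 4) * ε :=
    (setLIntegral_le_lintegral _ _).trans hgε
  exact (ENNReal.mul_le_mul_iff_right (by simp) (by simp)).1 (h1.trans h2)

/-! ### The rearrangement and the passage to the limit -/

/-- The nondecreasing rearrangement: its superlevel set at height `j` is the final segment of
`(a, b)` with the measure of `{j ≤ u}`. -/
lemma exists_rearrangement (a b : ℝ) (hab : a < b) (u : ℝ → ℤ) (m M : ℤ) (hmM : m ≤ M)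
    (hub : ∀ x ∈ Ioo a b, u x ∈ Icc m M) :
    ∃ v : ℝ → ℤ, Monotone v ∧ (∀ x, v x ∈ Icc m M) ∧
      ∀ j, (volume.restrict (Ioo a b)) {x | j ≤ v x} =
        (volume.restrict (Ioo a b)) {x | j ≤ u x} := by
  classical
  set μ := volume.restrict (Ioo a b) with hμ
  have hI : ∀ᵐ x ∂μ, x ∈ Ioo a b := ae_restrict_mem measurableSet_Ioo
  have hμ1 : μ univ = ENNReal.ofReal (b - a) := by simp [hμ]
  set T : ℤ → ℝ := fun j => b - (μ {x | j ≤ u x}).toReal with hT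
  have hTm : Monotone T := by
    intro i j hij
    have : (μ {x | j ≤ u x}).toReal ≤ (μ {x | i ≤ u x}).toReal :=
      ENNReal.toReal_mono (measure_ne_top μ _) (measure_mono fun x hx => hij.trans hx)
    simp only [hT]
    linarith
  have hTa : ∀ j, a ≤ T j := by
    intro j
    have : (μ {x | j ≤ u x}).toReal ≤ b - a := by
      refine ENNReal.toReal_le_of_le_ofReal (by linarith) ?_
      rw [← hμ1]
      exact measure_mono (subset_univ _)
    simp only [hT]
    linarith
  set F : ℝ → Finset ℤ := fun x => (Finset.Ioc m M).filter fun j => T j < x with hF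
  have hFc : ∀ x, ((F x).card : ℤ) ≤ M - m := by
    intro x
    have := Finset.card_le_card (Finset.filter_subset (fun j => T j < x) (Finset.Ioc m M))
    rw [Int.card_Ioc] at this
    simp only [hF]
    omega
  refine ⟨fun x => m + (F x).card, ?_, ?_, ?_⟩
  · intro x y hxy
    have : F x ⊆ F y := by
      intro j hj
      simp only [hF, Finset.mem_filter] at hj ⊢
      exact ⟨hj.1, hj.2.trans_le hxy⟩
    have := Finset.card_le_card this
    simp only
    omega
  · intro x
    have := hFc x
    change m ≤ m + ((F x).card : ℤ) ∧ m + ((F x).card : ℤ) ≤ M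
    omega
  · intro j
    rcases le_or_gt j m with hj | hj
    · refine measure_congr ?_
      filter_upwards [hI] with x hx
      refine propext ⟨fun _ => hj.trans (hub x hx).1, fun _ => ?_⟩
      change j ≤ m + ((F x).card : ℤ)
      omega
    rcases lt_or_ge M j with hj' | hj'
    · refine measure_congr ?_
      filter_upwards [hI] with x hx
      refine propext ⟨fun h => ?_, fun h => absurd ((show j ≤ u x from h).trans (hub x hx).2)
        (not_le.2 hj')⟩
      have h1 : j ≤ m + ((F x).card : ℤ) := h
      have := hFc x
      omega
    -- for `m < j ≤ M`, `j` is counted at `x` exactly when all of `(m, j]` is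
    have hiff : ∀ x, j ≤ m + ((F x).card : ℤ) ↔ T j < x := by
      intro x
      constructor
      · intro h
        by_contra hcon
        have hs : F x ⊆ Finset.Ioo m j := by
          intro i hi
          simp only [hF, Finset.mem_filter, Finset.mem_Ioc] at hi
          refine Finset.mem_Ioo.2 ⟨hi.1.1, ?_⟩
          by_contra hij
          exact hcon ((hTm (not_lt.1 hij)).trans_lt hi.2)
        have := Finset.card_le_card hs
        rw [Int.card_Ioo] at this
        omega
      · intro h
        have hs : Finset.Ioc m j ⊆ F x := by
          intro i hi
          simp only [hF, Finset.mem_filter, Finset.mem_Ioc] at hi ⊢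
          exact ⟨⟨hi.1, hi.2.trans hj'⟩, (hTm hi.2).trans_lt h⟩
        have := Finset.card_le_card hs
        rw [Int.card_Ioc] at this
        omega
    have hset : {x | j ≤ m + ((F x).card : ℤ)} = Ioi (T j) := by
      ext x
      exact hiff x
    rw [hset, hμ, Measure.restrict_apply measurableSet_Ioi]
    have : Ioi (T j) ∩ Ioo a b = Ioo (T j) b := by
      ext x
      have := hTa j
      simp only [mem_inter_iff, mem_Ioi, mem_Ioo]
      constructor
      · rintro ⟨h1, -, h2⟩; exact ⟨h1, h2⟩
      · rintro ⟨h1, h2⟩; exact ⟨h1, by linarith, h2⟩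
    rw [this, Real.volume_Ioo]
    simp only [hT, _root_.sub_sub_cancel]
    exact ENNReal.ofReal_toReal (measure_ne_top μ _)

/-- The rearrangement inequality for a bounded nonincreasing cost on the whole line. -/
lemma hostility_le_of_bounded (a b : ℝ) (hab : a < b) (k : ℕ) (C : ℝ → ℝ) (hC : Antitone C)
    (hC0 : ∀ t, 0 ≤ C t) (K : ℝ) (hCK : ∀ t, C t ≤ K) (u v : ℝ → ℤ) (hu : Measurable u)
    (hv : Measurable v) (hvm : MonotoneOn v (Ioo a b)) (m M : ℤ) (hmM : m ≤ M)
    (hub : ∀ x ∈ Ioo a b, u x ∈ Icc m M) (hvb : ∀ x ∈ Ioo a b, v x ∈ Icc m M)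
    (huv : ∀ j, (volume.restrict (Ioo a b)) {x | j ≤ v x} =
        (volume.restrict (Ioo a b)) {x | j ≤ u x}) :
    semiDiscreteHostility a b k C v ≤ semiDiscreteHostility a b k C u := by
  set μ := volume.restrict (Ioo a b) with hμ
  set L : ℝ≥0∞ := 2 * ENNReal.ofReal K * ENNReal.ofReal (b - a) with hL
  set n : ℝ≥0∞ := ((Finset.Icc m M).card : ℝ≥0∞) with hn
  have hLtop : L ≠ ∞ :=
    ENNReal.mul_ne_top (ENNReal.mul_ne_top (by simp) ENNReal.ofReal_ne_top) ENNReal.ofReal_ne_top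
  -- discretising at precision `ε` costs `L ε` for `u` and `L n (2 ε)` for `v`
  have main : ∀ ε : ℝ≥0∞, ε ≠ 0 → semiDiscreteHostility a b k C v ≤
      semiDiscreteHostility a b k C u + (L + L * n * 2) * ε := by
    intro ε hε
    obtain ⟨N, g, hN, hgb, hgε⟩ := exists_stepFn a b hab u hu m M hmM hub ε hε
    obtain ⟨g', hg'm, hgg', hg'g⟩ := exists_sorted N g
    have hN' : (0 : ℝ) < N := by exact_mod_cast hN
    set h := (b - a) / N with hh
    have hhpos : 0 < h := div_pos (sub_pos.2 hab) hN'
    have hb : a + N * h = b := by rw [hh]; field_simp; ring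
    set U := stepFn a h g with hU
    set V := stepFn a h g' with hV
    have hUm : Measurable U := measurable_stepFn _ _ _
    have hVm : Measurable V := measurable_stepFn _ _ _
    have hVmono : MonotoneOn V (Ioo a b) := by
      have := monotoneOn_stepFn a h hhpos N g' hg'm
      rwa [hb] at this
    have hVb : ∀ x ∈ Ioo a b, V x ∈ Icc m M := by
      intro x hx
      have hlt : ⌊(x - a) / h⌋₊ < N := by
        rw [Nat.floor_lt (div_nonneg (by linarith [hx.1]) hhpos.le), div_lt_iff₀ hhpos]
        linarith [hx.2]
      obtain ⟨j, hj⟩ := hg'g _ hlt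
      simp only [hV, stepFn, hj]
      exact hgb j
    have hUV : ∀ j, μ {x | j ≤ U x} = μ {x | j ≤ V x} := by
      intro j
      have := stepFn_superlevel a h hhpos.le N g g' hgg' j
      rwa [hb] at this
    have d1 : ∀ j, μ {x | j ≤ v x} ≤ μ {x | j ≤ V x} + ε := by
      intro j
      rw [huv, ← hUV]
      refine le_trans (measure_mono ?_) ((measure_union_le _ {x | u x ≠ U x}).trans
        (add_le_add le_rfl hgε))
      intro x hx
      by_cases hxx : u x = U x
      · exact Or.inl (show j ≤ U x from hxx ▸ (show j ≤ u x from hx))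
      · exact Or.inr hxx
    have d2 : ∀ j, μ {x | j ≤ V x} ≤ μ {x | j ≤ v x} + ε := by
      intro j
      rw [huv, ← hUV]
      refine le_trans (measure_mono ?_) ((measure_union_le _ {x | u x ≠ U x}).trans
        (add_le_add le_rfl hgε))
      intro x hx
      by_cases hxx : u x = U x
      · exact Or.inl (show j ≤ u x from hxx.symm ▸ (show j ≤ U x from hx))
      · exact Or.inr hxx
    have hdiff := monotone_diff a b v V hv hVm hvm hVmono m M hvb hVb ε d1 d2
    have hdiff' : μ {x | U x ≠ u x} ≤ ε := by
      simpa only [ne_comm] using hgε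
    have hsort := hostility_stepFn_sorted_le a h hhpos.le N k C hC hC0 g g' hg'm hgg'
    rw [hb] at hsort
    calc semiDiscreteHostility a b k C v
        ≤ semiDiscreteHostility a b k C V + L * μ {x | v x ≠ V x} :=
          hostility_le_add a b k C hC0 K hCK v V hv hVm
      _ ≤ (semiDiscreteHostility a b k C u + L * μ {x | U x ≠ u x}) + L * μ {x | v x ≠ V x} :=
          add_le_add (hsort.trans (hostility_le_add a b k C hC0 K hCK U u hUm hu)) le_rfl
      _ ≤ (semiDiscreteHostility a b k C u + L * ε) + L * (n * (2 * ε)) := by gcongr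
      _ = _ := by ring
  set Q := L + L * n * 2 with hQ
  have hQtop : Q ≠ ∞ := by
    refine ENNReal.add_ne_top.2 ⟨hLtop, ENNReal.mul_ne_top (ENNReal.mul_ne_top hLtop ?_) (by simp)⟩
    exact ENNReal.natCast_ne_top _
  refine ENNReal.le_of_forall_pos_le_add fun η hη _ => ?_
  have hη' : (η : ℝ≥0∞) / (Q + 1) ≠ 0 :=
    (ENNReal.div_pos (by exact_mod_cast hη.ne') (by simp [hQtop])).ne'
  refine (main _ hη').trans (add_le_add le_rfl ?_)
  calc Q * (η / (Q + 1)) ≤ (Q + 1) * (η / (Q + 1)) := by gcongr; exact le_self_add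
    _ ≤ η := ENNReal.mul_div_le

/-! ### Unbounded costs -/

/-- Truncation at height `n` of the cost `c` on `(0, l)`, extended by `n` to the left and by `0` to
the right, so that it is nonincreasing on all of `ℝ` when `c` is nonincreasing and nonnegative on
`(0, l)`. -/
noncomputable def truncCost (l : ℝ) (c : ℝ → ℝ) (n : ℕ) (t : ℝ) : ℝ :=
  if t ≤ 0 then n else if t < l then min (c t) n else 0

lemma truncCost_mono (l : ℝ) (c : ℝ → ℝ) (t : ℝ) : Monotone fun n => truncCost l c n t := by
  intro n n' hnn
  have hnn' : (n : ℝ) ≤ n' := by exact_mod_cast hnn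
  simp only [truncCost]
  split_ifs
  · exact hnn'
  · exact min_le_min le_rfl hnn'
  · exact le_rfl

lemma integrand_mono (k : ℕ) (l : ℝ) (c : ℝ → ℝ) (u : ℝ → ℤ) (x y : ℝ) :
    Monotone fun n => ENNReal.ofReal
      (phik (k : ℝ) ((|u y - u x| : ℤ) : ℝ) * truncCost l c n |y - x|) :=
  fun _ _ hnn => ENNReal.ofReal_le_ofReal
    (mul_le_mul_of_nonneg_left (truncCost_mono l c _ hnn) (phik_nonneg _ _))

lemma integrand_eq_iSup (a b : ℝ) (k : ℕ) (c : ℝ → ℝ) (u : ℝ → ℤ) (x : ℝ) (hx : x ∈ Ioo a b)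
    (y : ℝ) (hy : y ∈ Ioo a b) :
    ENNReal.ofReal (phik (k : ℝ) ((|u y - u x| : ℤ) : ℝ) * c |y - x|) =
      ⨆ n : ℕ, ENNReal.ofReal
        (phik (k : ℝ) ((|u y - u x| : ℤ) : ℝ) * truncCost (b - a) c n |y - x|) := by
  -- on the diagonal the interaction law vanishes, so the value of `c` at `0` is irrelevant
  rcases eq_or_ne x y with rfl | hxy
  · simp [phik]
  have h1 : ¬ |y - x| ≤ 0 := not_le.2 (abs_pos.2 (sub_ne_zero.2 hxy.symm))
  have h2 : |y - x| < b - a := by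
    rw [abs_lt]
    constructor <;> linarith [hx.1, hx.2, hy.1, hy.2]
  have h3 : ∀ n, truncCost (b - a) c n |y - x| = min (c |y - x|) n := fun n => by
    rw [truncCost, if_neg h1, if_pos h2]
  simp only [h3]
  refine le_antisymm ?_ (iSup_le fun n => ENNReal.ofReal_le_ofReal
    (mul_le_mul_of_nonneg_left (min_le_left _ _) (phik_nonneg _ _)))
  obtain ⟨n, hn⟩ := exists_nat_ge (c |y - x|)
  refine le_iSup_of_le n ?_
  rw [min_eq_left hn]

lemma lintegral_lintegral_iSup (μ : Measure ℝ) [SFinite μ] (f : ℕ → ℝ → ℝ → ℝ≥0∞)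
    (hf : ∀ n, Measurable fun z : ℝ × ℝ => f n z.1 z.2) (hm : ∀ x y, Monotone fun n => f n x y) :
    ∫⁻ x, ∫⁻ y, ⨆ n, f n x y ∂μ ∂μ = ⨆ n, ∫⁻ x, ∫⁻ y, f n x y ∂μ ∂μ := by
  rw [← lintegral_iSup (fun n => (hf n).lintegral_prod_right')
    (fun n n' hnn x => lintegral_mono fun y => hm x y hnn)]
  exact lintegral_congr fun x => lintegral_iSup (fun n => (hf n).comp measurable_prodMk_left)
    (fun n n' hnn y => hm x y hnn)

/-- Truncating the cost is harmless: the hostility is the monotone limit of its truncations. -/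
lemma hostility_eq_iSup (a b : ℝ) (k : ℕ) (c : ℝ → ℝ)
    (hC : ∀ n, Antitone (truncCost (b - a) c n)) (u : ℝ → ℤ) (hu : Measurable u) :
    semiDiscreteHostility a b k c u =
      ⨆ n, semiDiscreteHostility a b k (truncCost (b - a) c n) u := by
  have h := lintegral_lintegral_iSup (volume.restrict (Ioo a b))
    (fun n x y => ENNReal.ofReal
      (phik (k : ℝ) ((|u y - u x| : ℤ) : ℝ) * truncCost (b - a) c n |y - x|))
    (fun n => measurable_integrand k _ (hC n).measurable u hu)
    (fun x y => integrand_mono k (b - a) c u x y)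
  refine Eq.trans ?_ h
  unfold semiDiscreteHostility
  exact setLIntegral_congr_fun measurableSet_Ioo fun x hx =>
    setLIntegral_congr_fun measurableSet_Ioo (integrand_eq_iSup a b k c u x hx)

/-- monotone rearrangement does not increase the semi-discrete
total `k`-hostility. -/
theorem semiDiscrete_rearrangement (a b : ℝ) (hab : a < b) (k : ℕ) (hk : 0 < k)
    (c : ℝ → ℝ) (hc_meas : Measurable c) (hc_nonneg : ∀ t ∈ Set.Ioo 0 (b - a), 0 ≤ c t)
    (hc_mono : AntitoneOn c (Set.Ioo 0 (b - a)))
    (u : ℝ → ℤ) (hu : Measurable u) (hfin : (u '' Set.Ioo a b).Finite) :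
    ∃ v : ℝ → ℤ, Measurable v ∧ MonotoneOn v (Set.Ioo a b) ∧
      (∀ j : ℤ, volume {x ∈ Set.Ioo a b | v x = j} = volume {x ∈ Set.Ioo a b | u x = j}) ∧
      semiDiscreteHostility a b k c v ≤ semiDiscreteHostility a b k c u := by
  obtain ⟨m, hm⟩ := hfin.bddBelow
  obtain ⟨M, hM⟩ := hfin.bddAbove
  have hub : ∀ x ∈ Ioo a b, u x ∈ Icc m M := fun x hx =>
    ⟨hm (mem_image_of_mem u hx), hM (mem_image_of_mem u hx)⟩
  obtain ⟨x₀, hx₀⟩ := nonempty_Ioo.2 hab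
  have hmM : m ≤ M := (hub x₀ hx₀).1.trans (hub x₀ hx₀).2
  obtain ⟨v, hvm, hvb, huv⟩ := exists_rearrangement a b hab u m M hmM hub
  have hv : Measurable v := hvm.measurable
  refine ⟨v, hv, hvm.monotoneOn _, ?_, ?_⟩
  · intro j
    have key : ∀ w : ℝ → ℤ, Measurable w → volume {x ∈ Ioo a b | w x = j} =
        (volume.restrict (Ioo a b)) {x | j ≤ w x} -
          (volume.restrict (Ioo a b)) {x | j + 1 ≤ w x} := by
      intro w hw
      have hmj : ∀ j : ℤ, MeasurableSet {x | j ≤ w x} := fun j =>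
        hw (measurableSet_Ici : MeasurableSet (Ici j))
      have hsub : {x | j + 1 ≤ w x} ⊆ {x | j ≤ w x} :=
        fun x hx => (Int.le_add_one le_rfl).trans hx
      rw [← measure_sdiff hsub (hmj _).nullMeasurableSet (measure_ne_top _ _),
        Measure.restrict_apply ((hmj _).diff (hmj _))]
      congr 1
      ext x
      constructor
      · rintro ⟨h1, h2⟩
        exact ⟨⟨h2.ge, fun h3 => by have h4 : j + 1 ≤ w x := h3; omega⟩, h1⟩
      · rintro ⟨⟨h1, h2⟩, h3⟩
        have h1' : j ≤ w x := h1
        have h2' : ¬ j + 1 ≤ w x := h2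
        exact ⟨h3, by omega⟩
    rw [key v hv, key u hu, huv, huv]
  · have hC0 : ∀ n t, 0 ≤ truncCost (b - a) c n t := by
      intro n t
      unfold truncCost
      split_ifs with h1 h2
      · positivity
      · exact le_min (hc_nonneg t ⟨not_le.1 h1, h2⟩) (by positivity)
      · exact le_rfl
    have hCK : ∀ (n : ℕ) t, truncCost (b - a) c n t ≤ n := by
      intro n t
      unfold truncCost
      split_ifs
      · exact le_rfl
      · exact min_le_right _ _
      · positivity
    have hC : ∀ n, Antitone (truncCost (b - a) c n) := by
      intro n s t hst
      rcases le_or_gt s 0 with hs | hs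
      · refine (hCK n t).trans_eq ?_
        simp [truncCost, hs]
      rcases lt_or_ge t (b - a) with ht | ht
      · have hs' : s < b - a := hst.trans_lt ht
        have ht' : 0 < t := hs.trans_le hst
        simp only [truncCost, hs.not_ge, ht'.not_ge, hs', ht, if_true, if_false]
        exact min_le_min (hc_mono ⟨hs, hs'⟩ ⟨ht', ht⟩ hst) le_rfl
      · refine le_trans (le_of_eq ?_) (hC0 n s)
        simp [truncCost, ht.not_gt, (hs.trans_le hst).not_ge]
    rw [hostility_eq_iSup a b k c hC v hv, hostility_eq_iSup a b k c hC u hu]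
    exact iSup_mono fun n => hostility_le_of_bounded a b hab k _ (hC n) (hC0 n) n (hCK n) u v hu hv
      (hvm.monotoneOn _) m M hmM hub (fun x _ => hvb x) huv
end

section
/- Let (a,b) ⊆ ℝ be a bounded interval, let δ > 0, p ≥ 1, let φ = Σ_{k=1}^{m} λ_k φ_k with m a positive integer and λ_1,…,λ_m ≥ 0, and let u : (a,b) → ℝ be measurable and bounded. Let S_δ u be the vertical δ-segmentation of u. Then there exists a nondecreasing measurable function v : (a,b) → δℤ such that for every j ∈ ℤ the Lebesgue measure of {x : v(x) = jδ} equals the Lebesgue measure of {x : S_δ u(x) = jδ}, and Λ_{δ,p}(φ,u,(a,b)) ≥ Λ_{δ,p}(φ,v,(a,b)). -/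
/-!
The segmentation step costs nothing: if `⌊s⌋` and `⌊t⌋` differ by more than the integer `k`, then
`s` and `t` differ by more than `k` (`phik_floor_le`), so replacing `u` by `δ ⌊u / δ⌋` decreases
the integrand pointwise. After a shift the segmentation is an `ℕ`-valued function `W` bounded by
some `L`, and it remains to see that its nondecreasing rearrangement (`sortedFun`) has the smaller
energy.

The heart of the matter is combinatorial (`closeCount_le_of_sorted`): among all orderings of a
finite sequence of integers, the nondecreasing one maximises the number of pairs at index distance
at most `m` whose values differ by at most `k`. The proof is by induction, deleting a maximal entry.
Let `q` be the number of other entries within `k` of the maximum, which does not depend on the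
ordering. Deletion loses the close pairs containing the maximum and gains the pairs that straddled
it at distance `m + 1`; shifting the left window onto the right one (`window_le`) shows that the
net loss is at most `min m q`. For the sorted sequence with its last entry deleted the loss is at
least `min m q` (`closeCount_sorted`). Writing a nonincreasing weight as a positive combination of
indicators of `{dist ≤ M}` gives the weighted version (`weighted_le_of_sorted`).

For a continuous nonincreasing kernel on `(a, b)` (`lintegral_sortedFun_le`), `W` is approximated on
the cells of a uniform grid by its rounded averages, which converge to `W` almost everywhere by
Lebesgue differentiation. The super-level measures then converge, so the sorted approximations
converge to `sortedFun` off finitely many jumps, and dominated convergence applies on both sides.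
The singular kernel is the increasing limit of `δ ^ p / (|y - x| + ε) ^ (1 + p)` as `ε → 0`, and
Fatou's lemma concludes (`energy_sortedFun_le`).
-/

open MeasureTheory Filter Set Topology ENNReal

/-- The functional `Λ_{δ,p}(φ,u,Ω)` in dimension one. -/
noncomputable def Lambda1 (φ : ℝ → ℝ) (p δ : ℝ) (u : ℝ → ℝ) (Ω : Set ℝ) : ℝ≥0∞ :=
  ∫⁻ x in Ω, ∫⁻ y in Ω, ENNReal.ofReal (φ (|u y - u x| / δ) * δ ^ p / |y - x| ^ (1 + p))

/-! ### Close pairs in finite sequences -/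

/-- Two levels are `k`-close when they differ by at most `k`. -/
def Close (k a b : ℕ) : Prop := a ≤ b + k ∧ b ≤ a + k

instance (k a b : ℕ) : Decidable (Close k a b) := by unfold Close; infer_instance

/-- Number of index pairs `i < j ≤ i + m` whose values are `k`-close. -/
def closeCount {n : ℕ} (m k : ℕ) (s : Fin n → ℕ) : ℕ :=
  ∑ i : Fin n, ∑ j : Fin n,
    if (i : ℕ) < j ∧ (j : ℕ) ≤ i + m ∧ Close k (s i) (s j) then 1 else 0

lemma sum_sum_succAbove {n : ℕ} (p : Fin (n + 1)) (f : Fin (n + 1) → Fin (n + 1) → ℕ) :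
    ∑ i, ∑ j, f i j = f p p + ∑ j, f p (p.succAbove j) + ∑ i, f (p.succAbove i) p
      + ∑ i, ∑ j, f (p.succAbove i) (p.succAbove j) := by
  rw [Fin.sum_univ_succAbove _ p, Fin.sum_univ_succAbove _ p]
  have : ∀ i, ∑ j, f (p.succAbove i) j
      = f (p.succAbove i) p + ∑ j, f (p.succAbove i) (p.succAbove j) :=
    fun i => Fin.sum_univ_succAbove _ p
  simp only [this, Finset.sum_add_distrib]
  ring

lemma ite_add_ite_le {A B C : Prop} [Decidable A] [Decidable B] [Decidable C] (h1 : A → ¬ B)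
    (h2 : A → C) (h3 : B → C) :
    (if A then 1 else 0) + (if B then 1 else 0) ≤ (if C then 1 else 0 : ℕ) := by
  by_cases hA : A <;> by_cases hB : B <;> by_cases hC : C <;> simp_all

lemma sum_Ico_telescope (c : ℕ → ℝ) {d n : ℕ} (h : d ≤ n) :
    ∑ M ∈ Finset.Ico d n, (c M - c (M + 1)) = c d - c n := by
  induction n, h using Nat.le_induction with
  | base => simp
  | succ n hn ih => rw [Finset.sum_Ico_succ_top hn, ih]; ring

/-- Shift the window of length `m` to the left of `p` by `m + 1`, onto the window of length `m` to
the right of `p`: the two marked sets have union of size at most `m`, and their overlap consists of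
marked pairs at distance exactly `m + 1` straddling `p`. -/
lemma window_le {n : ℕ} (m : ℕ) (p : Fin n) (e : Fin n → Prop) [DecidablePred e] :
    (∑ j : Fin n, if (p : ℕ) < j ∧ (j : ℕ) ≤ p + m ∧ e j then 1 else 0)
      + (∑ i : Fin n, if (i : ℕ) < p ∧ (p : ℕ) ≤ i + m ∧ e i then 1 else 0)
    ≤ m + ∑ i : Fin n, ∑ j : Fin n,
        if (i : ℕ) < p ∧ (p : ℕ) < j ∧ (j : ℕ) = i + m + 1 ∧ e i ∧ e j then 1 else 0 := by
  classical
  rw [← Fintype.sum_prod_type' (f := fun i j : Fin n =>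
    if (i : ℕ) < p ∧ (p : ℕ) < j ∧ (j : ℕ) = i + m + 1 ∧ e i ∧ e j then 1 else 0)]
  simp only [← Finset.card_filter]
  set R := Finset.univ.filter (fun j : Fin n => (p : ℕ) < j ∧ (j : ℕ) ≤ p + m ∧ e j) with hR
  set L := Finset.univ.filter (fun i : Fin n => (i : ℕ) < p ∧ (p : ℕ) ≤ i + m ∧ e i) with hL
  set S := Finset.univ.filter (fun x : Fin n × Fin n =>
    (x.1 : ℕ) < p ∧ (p : ℕ) < x.2 ∧ (x.2 : ℕ) = x.1 + m + 1 ∧ e x.1 ∧ e x.2) with hS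
  have cR : (R.image (fun j : Fin n => (j : ℕ))).card = R.card :=
    Finset.card_image_of_injective _ Fin.val_injective
  have cL : (L.image (fun j : Fin n => (j : ℕ) + m + 1)).card = L.card :=
    Finset.card_image_of_injective _ (fun x y h => by
      apply Fin.ext
      omega)
  have h1 : (R.image (fun j : Fin n => (j : ℕ)) ∪ L.image (fun j : Fin n => (j : ℕ) + m + 1)).card
      ≤ m := by
    have : (Finset.Ico ((p : ℕ) + 1) (p + m + 1)).card = m := by rw [Nat.card_Ico]; omega
    rw [← this]
    apply Finset.card_le_card
    intro x hx
    simp only [Finset.mem_union, Finset.mem_image, hR, hL, Finset.mem_filter, Finset.mem_univ,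
      true_and] at hx
    rw [Finset.mem_Ico]
    rcases hx with ⟨j, hj, rfl⟩ | ⟨j, hj, rfl⟩ <;> omega
  have h2 : (R.image (fun j : Fin n => (j : ℕ)) ∩ L.image (fun j : Fin n => (j : ℕ) + m + 1)).card
      ≤ S.card := by
    refine le_trans (Finset.card_le_card ?_)
      (Finset.card_image_le (s := S) (f := fun x => (x.2 : ℕ)))
    intro x hx
    simp only [Finset.mem_inter, Finset.mem_image, hR, hL, hS, Finset.mem_filter, Finset.mem_univ,
      true_and] at hx ⊢
    obtain ⟨⟨j, hj, rfl⟩, ⟨i, hi, hij⟩⟩ := hx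
    exact ⟨(i, j), ⟨hi.1, hj.1, hij.symm, hi.2.2, hj.2.2⟩, rfl⟩
  have h3 := Finset.card_union_add_card_inter (R.image (fun j : Fin n => (j : ℕ)))
    (L.image (fun j : Fin n => (j : ℕ) + m + 1))
  omega

/-- Deleting a maximal entry of a sequence: the pairs lost involve the deleted entry, the pairs
gained straddle it. -/
lemma closeCount_le_remove {n : ℕ} (m k : ℕ) (s : Fin (n + 1) → ℕ) (p : Fin (n + 1))
    (hmax : ∀ i, s i ≤ s p) :
    closeCount m k s ≤ closeCount m k (fun i => s (p.succAbove i))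
      + min m (∑ i : Fin n, if s p - k ≤ s (p.succAbove i) then 1 else 0) := by
  set e : Fin (n + 1) → Prop := fun i => s p - k ≤ s i with he
  have hwin := window_le m p e
  set st : Fin (n + 1) → Fin (n + 1) → ℕ := fun i j =>
    if (i : ℕ) < p ∧ (p : ℕ) < j ∧ (j : ℕ) = i + m + 1 ∧ e i ∧ e j then 1 else 0 with hst
  have hst_sum : ∑ i, ∑ j, st i j = ∑ i, ∑ j, st (p.succAbove i) (p.succAbove j) := by
    rw [sum_sum_succAbove p st]
    simp [hst]
  rw [Fin.sum_univ_succAbove _ p, Fin.sum_univ_succAbove _ p, hst_sum] at hwin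
  have hC : closeCount m k s = (∑ j, if (p : ℕ) < p.succAbove j ∧ (p.succAbove j : ℕ) ≤ p + m ∧
        e (p.succAbove j) then 1 else 0)
      + (∑ i, if (p.succAbove i : ℕ) < p ∧ (p : ℕ) ≤ p.succAbove i + m ∧
        e (p.succAbove i) then 1 else 0)
      + ∑ i, ∑ j, if (p.succAbove i : ℕ) < p.succAbove j ∧
          (p.succAbove j : ℕ) ≤ p.succAbove i + m ∧
          Close k (s (p.succAbove i)) (s (p.succAbove j)) then 1 else 0 := by
    unfold closeCount
    rw [sum_sum_succAbove p]
    congr 1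
    congr 1
    · simp only [lt_self_iff_false, false_and, if_false, zero_add]
      refine Finset.sum_congr rfl fun j _ => if_congr ?_ rfl rfl
      have := hmax (p.succAbove j)
      simp only [Close, he]
      omega
    · refine Finset.sum_congr rfl fun j _ => if_congr ?_ rfl rfl
      have := hmax (p.succAbove j)
      simp only [Close, he]
      omega
  -- after the deletion, surviving close pairs stay in the window, and straddling pairs at distance
  -- `m + 1` with both values in `[s p - k, s p]` enter it
  have hD : (∑ i, ∑ j, if (p.succAbove i : ℕ) < p.succAbove j ∧
          (p.succAbove j : ℕ) ≤ p.succAbove i + m ∧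
          Close k (s (p.succAbove i)) (s (p.succAbove j)) then 1 else 0)
      + ∑ i, ∑ j, st (p.succAbove i) (p.succAbove j)
      ≤ closeCount m k (fun i => s (p.succAbove i)) := by
    unfold closeCount
    rw [← Finset.sum_add_distrib]
    refine Finset.sum_le_sum fun i _ => ?_
    rw [← Finset.sum_add_distrib]
    refine Finset.sum_le_sum fun j _ => ?_
    have h1 := hmax (p.succAbove i)
    have h2 := hmax (p.succAbove j)
    have vi : (p.succAbove i : ℕ) = if (i : ℕ) < p then (i : ℕ) else i + 1 := by
      simp only [Fin.succAbove, Fin.lt_def, Fin.val_castSucc]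
      split_ifs <;> simp
    have vj : (p.succAbove j : ℕ) = if (j : ℕ) < p then (j : ℕ) else j + 1 := by
      simp only [Fin.succAbove, Fin.lt_def, Fin.val_castSucc]
      split_ifs <;> simp
    simp only [hst, he, Close]
    refine ite_add_ite_le ?_ ?_ ?_ <;> split_ifs at vi vj <;> omega
  have hN : (∑ j, if (p : ℕ) < p.succAbove j ∧ (p.succAbove j : ℕ) ≤ p + m ∧
        e (p.succAbove j) then 1 else 0)
      + (∑ i, if (p.succAbove i : ℕ) < p ∧ (p : ℕ) ≤ p.succAbove i + m ∧
        e (p.succAbove i) then 1 else 0)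
      ≤ ∑ i : Fin n, if s p - k ≤ s (p.succAbove i) then 1 else 0 := by
    rw [← Finset.sum_add_distrib]
    refine Finset.sum_le_sum fun i _ => ?_
    simp only [he]
    split_ifs <;> omega
  simp only [lt_self_iff_false, false_and, if_false, zero_add] at hwin
  rw [hC]
  rcases le_total m (∑ i : Fin n, if s p - k ≤ s (p.succAbove i) then 1 else 0) with h | h
  · rw [min_eq_left h]; omega
  · rw [min_eq_right h]; omega

/-- For a nondecreasing sequence, removing the last entry achieves equality in
`closeCount_le_remove`. -/
lemma closeCount_sorted {n : ℕ} (m k : ℕ) (t : Fin (n + 1) → ℕ) (ht : Monotone t) :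
    closeCount m k (fun i : Fin n => t i.castSucc)
      + min m (∑ i : Fin n, if t (Fin.last n) - k ≤ t i.castSucc then 1 else 0)
      ≤ closeCount m k t := by
  have hC : closeCount m k t = (∑ i : Fin n, if n ≤ (i : ℕ) + m ∧
        t (Fin.last n) - k ≤ t i.castSucc then 1 else 0)
      + closeCount m k (fun i : Fin n => t i.castSucc) := by
    unfold closeCount
    rw [sum_sum_succAbove (Fin.last n)]
    simp only [Fin.succAbove_last, Fin.val_last, Fin.val_castSucc, lt_self_iff_false, false_and,
      if_false, zero_add]
    congr 1
    rw [Finset.sum_eq_zero, zero_add]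
    · refine Finset.sum_congr rfl fun j _ => if_congr ?_ rfl rfl
      have := ht (Fin.le_last j.castSucc)
      simp only [Close]
      omega
    · intro j _
      rw [if_neg]
      omega
  rw [hC, add_comm]
  refine Nat.add_le_add_right ?_ _
  -- either the whole final window is close to the last entry, or every entry close to it lies in
  -- that window, by monotonicity
  by_cases h : ∀ i : Fin n, n ≤ (i : ℕ) + m → t (Fin.last n) - k ≤ t i.castSucc
  · have h1 : (∑ i : Fin n, if n ≤ (i : ℕ) + m ∧
        t (Fin.last n) - k ≤ t i.castSucc then 1 else 0)
        = ∑ i : Fin n, if n ≤ (i : ℕ) + m then 1 else 0 :=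
      Finset.sum_congr rfl fun i _ => if_congr (by have := h i; tauto) rfl rfl
    have h2 : (∑ i : Fin n, if n ≤ (i : ℕ) + m then 1 else 0) = n - (n - m) := by
      rw [Fin.sum_univ_eq_sum_range (fun i => if n ≤ i + m then 1 else 0) n, ← Finset.card_filter]
      rw [← Nat.card_Ico]
      congr 1
      ext x
      simp only [Finset.mem_filter, Finset.mem_range, Finset.mem_Ico]
      omega
    have h3 : (∑ i : Fin n, if t (Fin.last n) - k ≤ t i.castSucc then 1 else 0) ≤ n := by
      rw [← Finset.card_filter]
      exact (Finset.card_le_univ _).trans (by simp)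
    rw [h1, h2]
    omega
  · push Not at h
    obtain ⟨i₀, hi₀, h₀⟩ := h
    refine (min_le_right _ _).trans (Finset.sum_le_sum fun i _ => ?_)
    by_cases hi : t (Fin.last n) - k ≤ t i.castSucc
    · have : i₀ ≤ i := by
        by_contra hlt
        have := ht (Fin.castSucc_le_castSucc_iff.2 (le_of_not_ge hlt))
        omega
      have := Fin.le_def.1 this
      rw [if_pos hi, if_pos ⟨by omega, hi⟩]
    · rw [if_neg hi]
      exact Nat.zero_le _

/-- Among all sequences with given level counts, the nondecreasing one has the largest number of
close pairs at index distance at most `m`. -/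
theorem closeCount_le_of_sorted (m k : ℕ) : ∀ (n : ℕ) (s t : Fin n → ℕ), Monotone t →
    (∀ l, (∑ i, if l ≤ s i then 1 else 0) = ∑ i, if l ≤ t i then 1 else 0) →
    closeCount m k s ≤ closeCount m k t := by
  intro n
  induction n with
  | zero => intro s t _ _; simp [closeCount]
  | succ n ih =>
    intro s t ht hcount
    -- equal level counts force the two maxima to agree
    have hle : ∀ i, s i ≤ t (Fin.last n) := by
      intro i
      by_contra hi
      have h0 := hcount (t (Fin.last n) + 1)
      rw [← Finset.card_filter, ← Finset.card_filter] at h0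
      have h1 : (Finset.univ.filter fun j => t (Fin.last n) + 1 ≤ t j) = ∅ := by
        ext j
        have := ht (Fin.le_last j)
        simp
        omega
      rw [h1, Finset.card_empty, Finset.card_eq_zero] at h0
      have : i ∈ (∅ : Finset (Fin (n + 1))) := by
        rw [← h0]; simp; omega
      simp at this
    obtain ⟨p, hp⟩ : ∃ p, t (Fin.last n) ≤ s p := by
      by_contra hno
      have h0 := hcount (t (Fin.last n))
      rw [← Finset.card_filter, ← Finset.card_filter] at h0
      have h1 : (Finset.univ.filter fun j => t (Fin.last n) ≤ s j) = ∅ := by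
        ext j
        push Not at hno
        simpa using hno j
      rw [h1, Finset.card_empty, eq_comm, Finset.card_eq_zero] at h0
      have : Fin.last n ∈ (∅ : Finset (Fin (n + 1))) := by
        rw [← h0]; simp
      simp at this
    have hpe : s p = t (Fin.last n) := le_antisymm (hle p) hp
    have hcount' : ∀ l, (∑ i, if l ≤ s (p.succAbove i) then 1 else 0)
        = ∑ i : Fin n, if l ≤ t i.castSucc then 1 else 0 := by
      intro l
      have h0 := hcount l
      rw [Fin.sum_univ_succAbove _ p, Fin.sum_univ_succAbove _ (Fin.last n), hpe] at h0
      simpa [Fin.succAbove_last] using h0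
    have h1 := closeCount_le_remove m k s p (fun i => (hle i).trans hp)
    have h2 := closeCount_sorted m k t ht
    have h3 := ih (fun i => s (p.succAbove i)) (fun i => t i.castSucc)
      (fun i j hij => ht (Fin.castSucc_le_castSucc_iff.2 hij)) hcount'
    rw [hcount', hpe] at h1
    omega

/-- A sum against a nonincreasing weight of the index distance, of a piecewise constant function of
the value distance, is smallest for the nondecreasing sequence: the weight is a nonnegative
combination of indicators of `dist ≤ M`. -/
theorem weighted_le_of_sorted (n m : ℕ) (lam : ℕ → ℝ) (hlam : ∀ k ∈ Finset.Icc 1 m, 0 ≤ lam k)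
    (c : ℕ → ℝ) (hc : Antitone c) (hc0 : ∀ d, 0 ≤ c d) (s t : Fin n → ℕ) (ht : Monotone t)
    (hcount : ∀ l, (∑ i, if l ≤ s i then 1 else 0) = ∑ i, if l ≤ t i then 1 else 0) :
    ∑ i : Fin n, ∑ j : Fin n, c (Nat.dist i j) *
        ∑ k ∈ Finset.Icc 1 m, lam k * (if Close k (t i) (t j) then 0 else 1)
      ≤ ∑ i : Fin n, ∑ j : Fin n, c (Nat.dist i j) *
        ∑ k ∈ Finset.Icc 1 m, lam k * (if Close k (s i) (s j) then 0 else 1) := by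
  have hfar : ∀ M k, (∑ i : Fin n, ∑ j : Fin n,
        if (i : ℕ) < j ∧ (j : ℕ) ≤ i + M ∧ ¬ Close k (t i) (t j) then (1 : ℝ) else 0)
      ≤ ∑ i : Fin n, ∑ j : Fin n,
        if (i : ℕ) < j ∧ (j : ℕ) ≤ i + M ∧ ¬ Close k (s i) (s j) then (1 : ℝ) else 0 := by
    intro M k
    have key : ∀ r : Fin n → ℕ, (∑ i : Fin n, ∑ j : Fin n,
        if (i : ℕ) < j ∧ (j : ℕ) ≤ i + M ∧ ¬ Close k (r i) (r j) then (1 : ℝ) else 0)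
        = (∑ i : Fin n, ∑ j : Fin n, if (i : ℕ) < j ∧ (j : ℕ) ≤ i + M then (1 : ℝ) else 0)
          - (closeCount M k r : ℝ) := by
      intro r
      unfold closeCount
      push_cast
      rw [← Finset.sum_sub_distrib]
      refine Finset.sum_congr rfl fun i _ => ?_
      rw [← Finset.sum_sub_distrib]
      refine Finset.sum_congr rfl fun j _ => ?_
      by_cases h1 : (i : ℕ) < j <;> by_cases h2 : (j : ℕ) ≤ i + M <;>
        by_cases h3 : Close k (r i) (r j) <;> simp [h1, h2, h3]
    rw [key, key]
    have : (closeCount M k s : ℝ) ≤ closeCount M k t := by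
      exact_mod_cast closeCount_le_of_sorted M k n s t ht hcount
    linarith
  have hw : ∀ k, (∑ i : Fin n, ∑ j : Fin n, c (Nat.dist i j) *
        (if Close k (t i) (t j) then 0 else 1))
      ≤ ∑ i : Fin n, ∑ j : Fin n, c (Nat.dist i j) * (if Close k (s i) (s j) then 0 else 1) := by
    intro k
    have key : ∀ r : Fin n → ℕ, (∑ i : Fin n, ∑ j : Fin n, c (Nat.dist i j) *
        (if Close k (r i) (r j) then 0 else 1))
        = 2 * (∑ M ∈ Finset.range n, (c M - c (M + 1)) * (∑ i : Fin n, ∑ j : Fin n,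
            if (i : ℕ) < j ∧ (j : ℕ) ≤ i + M ∧ ¬ Close k (r i) (r j) then (1 : ℝ) else 0)
          + c n * ∑ i : Fin n, ∑ j : Fin n,
            if (i : ℕ) < j ∧ (j : ℕ) ≤ i + n ∧ ¬ Close k (r i) (r j) then (1 : ℝ) else 0) := by
      intro r
      set f : Fin n → Fin n → ℝ := fun i j =>
        if (i : ℕ) < j ∧ ¬ Close k (r i) (r j) then c (Nat.dist i j) else 0 with hf
      have h1 : (∑ i : Fin n, ∑ j : Fin n, c (Nat.dist i j) *
          (if Close k (r i) (r j) then 0 else 1)) = ∑ i, ∑ j, (f i j + f j i) := by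
        refine Finset.sum_congr rfl fun i _ => Finset.sum_congr rfl fun j _ => ?_
        have hsym : Close k (r j) (r i) ↔ Close k (r i) (r j) := by
          unfold Close; tauto
        simp only [hf, hsym, Nat.dist_comm (j : ℕ) i]
        by_cases h3 : Close k (r i) (r j)
        · simp [h3]
        · rcases lt_trichotomy (i : ℕ) j with h | h | h
          · have h' : ¬ (j : ℕ) < i := by omega
            simp only [h, h', h3, not_false_eq_true, and_self, false_and, if_true, if_false]
            ring
          · exact absurd (by rw [Fin.ext h]; unfold Close; omega) h3
          · have h' : ¬ (i : ℕ) < j := by omega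
            simp only [h, h', h3, not_false_eq_true, and_self, false_and, if_true, if_false]
            ring
      have h2 : ∑ i, ∑ j, (f i j + f j i) = 2 * ∑ i, ∑ j, f i j := by
        simp only [Finset.sum_add_distrib]
        rw [Finset.sum_comm (f := fun i j => f j i)]
        ring
      rw [h1, h2]
      congr 1
      -- layer-cake by Abel summation: `c d = ∑ M in [d, n), (c M - c (M + 1)) + c n`
      have h3 : ∀ i j, f i j = (∑ M ∈ Finset.range n, (c M - c (M + 1)) *
            (if (i : ℕ) < j ∧ (j : ℕ) ≤ i + M ∧ ¬ Close k (r i) (r j) then (1 : ℝ) else 0))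
          + c n * (if (i : ℕ) < j ∧ (j : ℕ) ≤ i + n ∧ ¬ Close k (r i) (r j)
            then (1 : ℝ) else 0) := by
        intro i j
        by_cases h : (i : ℕ) < j ∧ ¬ Close k (r i) (r j)
        · have hd : Nat.dist i j = j - i := Nat.dist_eq_sub_of_le h.1.le
          have hjn : (j : ℕ) ≤ i + n := by omega
          simp only [hf, if_pos h, h.1, h.2, hjn, true_and, not_false_eq_true, and_true, if_true,
            mul_one, hd, mul_ite, mul_zero]
          rw [← Finset.sum_filter]
          have : (Finset.range n).filter (fun M => (j : ℕ) ≤ i + M)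
              = Finset.Ico ((j : ℕ) - i) n := by
            ext M
            simp only [Finset.mem_filter, Finset.mem_range, Finset.mem_Ico]
            omega
          rw [this, sum_Ico_telescope c (by omega : (j : ℕ) - i ≤ n)]
          ring
        · simp only [hf, if_neg h]
          rw [Finset.sum_eq_zero, if_neg (by tauto)]
          · ring
          · intro M _
            rw [if_neg (by tauto), mul_zero]
      simp only [h3, Finset.sum_add_distrib, Finset.mul_sum]
      congr 1
      exact (Finset.sum_congr rfl fun x _ => Finset.sum_comm).trans Finset.sum_comm
    rw [key, key]
    refine mul_le_mul_of_nonneg_left (add_le_add (Finset.sum_le_sum fun M _ => ?_) ?_) two_pos.le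
    · exact mul_le_mul_of_nonneg_left (hfar M k) (sub_nonneg.2 (hc (Nat.le_succ M)))
    · exact mul_le_mul_of_nonneg_left (hfar n k) (hc0 n)
  have hsw : ∀ r : Fin n → ℕ, (∑ i : Fin n, ∑ j : Fin n, c (Nat.dist i j) *
        ∑ k ∈ Finset.Icc 1 m, lam k * (if Close k (r i) (r j) then 0 else 1))
      = ∑ k ∈ Finset.Icc 1 m, lam k * ∑ i : Fin n, ∑ j : Fin n, c (Nat.dist i j) *
        (if Close k (r i) (r j) then 0 else 1) := by
    intro r
    simp only [Finset.mul_sum]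
    refine ((Finset.sum_congr rfl fun x _ => Finset.sum_comm).trans Finset.sum_comm).trans ?_
    refine Finset.sum_congr rfl fun k _ => Finset.sum_congr rfl fun i _ =>
      Finset.sum_congr rfl fun j _ => ?_
    ring
  rw [hsw, hsw]
  exact Finset.sum_le_sum fun k hk => mul_le_mul_of_nonneg_left (hw k) (hlam k hk)

/-! ### Sorted sequences and uniform grids -/

lemma succ_le_card_filter_iff (L : ℕ) (P : ℕ → Prop) [DecidablePred P]
    (hP : ∀ i j, i ≤ j → P j → P i) (l : ℕ) :
    l + 1 ≤ ((Finset.range L).filter P).card ↔ l < L ∧ P l := by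
  constructor
  · intro h
    by_contra hn
    have : (Finset.range L).filter P ⊆ Finset.range l := by
      intro x hx
      simp only [Finset.mem_filter, Finset.mem_range] at hx ⊢
      by_contra hlx
      exact hn ⟨by omega, hP l x (by omega) hx.2⟩
    have := Finset.card_le_card this
    rw [Finset.card_range] at this
    omega
  · rintro ⟨h1, h2⟩
    have : Finset.range (l + 1) ⊆ (Finset.range L).filter P := by
      intro x hx
      simp only [Finset.mem_filter, Finset.mem_range] at hx ⊢
      exact ⟨by omega, hP x l (by omega) h2⟩
    simpa using Finset.card_le_card this

/-- Number of indices below `n` at which the sequence `S` is at least `l`. -/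
def levelCount (n : ℕ) (S : ℕ → ℕ) (l : ℕ) : ℕ := ((Finset.range n).filter fun i => l ≤ S i).card

lemma levelCount_anti (n : ℕ) (S : ℕ → ℕ) : Antitone (levelCount n S) := by
  intro l l' h
  refine Finset.card_le_card fun x hx => ?_
  simp only [Finset.mem_filter] at hx ⊢
  exact ⟨hx.1, h.trans hx.2⟩

lemma levelCount_le (n : ℕ) (S : ℕ → ℕ) (l : ℕ) : levelCount n S l ≤ n :=
  (Finset.card_filter_le _ _).trans (by simp)

/-- The nondecreasing rearrangement of `S 0, …, S (n - 1)`, for values at most `L`: it reaches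
level `j` exactly at the last `levelCount n S j` indices. -/
def sortedSeq (n L : ℕ) (S : ℕ → ℕ) (i : ℕ) : ℕ :=
  ((Finset.range L).filter fun j => n ≤ i + levelCount n S (j + 1)).card

lemma succ_le_sortedSeq_iff (n L : ℕ) (S : ℕ → ℕ) (i l : ℕ) :
    l + 1 ≤ sortedSeq n L S i ↔ l < L ∧ n ≤ i + levelCount n S (l + 1) :=
  succ_le_card_filter_iff L _ (fun j j' hj h =>
    h.trans (Nat.add_le_add_left (levelCount_anti n S (by omega)) _)) l

lemma sortedSeq_mono (n L : ℕ) (S : ℕ → ℕ) : Monotone (sortedSeq n L S) := by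
  intro i i' hi
  refine Finset.card_le_card fun x hx => ?_
  simp only [Finset.mem_filter] at hx ⊢
  exact ⟨hx.1, by omega⟩

lemma levelCount_sortedSeq (n L : ℕ) (S : ℕ → ℕ) (hS : ∀ i, S i ≤ L) (l : ℕ) :
    levelCount n (sortedSeq n L S) l = levelCount n S l := by
  rcases l with _ | l
  · simp [levelCount]
  · by_cases hl : l < L
    · have h1 := levelCount_le n S (l + 1)
      have : (Finset.range n).filter (fun i => l + 1 ≤ sortedSeq n L S i)
          = Finset.Ico (n - levelCount n S (l + 1)) n := by
        ext x
        simp only [Finset.mem_filter, Finset.mem_range, Finset.mem_Ico, succ_le_sortedSeq_iff]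
        omega
      rw [levelCount, this, Nat.card_Ico]
      omega
    · have h2 : levelCount n S (l + 1) = 0 := by
        rw [levelCount, Finset.card_eq_zero, Finset.filter_eq_empty_iff]
        intro x _
        have := hS x
        omega
      rw [h2, levelCount, Finset.card_eq_zero, Finset.filter_eq_empty_iff]
      intro x _ h
      exact hl ((succ_le_sortedSeq_iff n L S x l).1 h).1

/-- The piecewise constant interaction `Σ λ_k 𝟙_{|a - b| > k}` on integer levels. -/
noncomputable def levelInteraction (m : ℕ) (lam : ℕ → ℝ) (a b : ℕ) : ℝ :=
  ∑ k ∈ Finset.Icc 1 m, lam k * (if Close k a b then 0 else 1)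

lemma levelInteraction_nonneg {m : ℕ} {lam : ℕ → ℝ} (hlam : ∀ k ∈ Finset.Icc 1 m, 0 ≤ lam k)
    (a b : ℕ) : 0 ≤ levelInteraction m lam a b :=
  Finset.sum_nonneg fun k hk => mul_nonneg (hlam k hk) (by split_ifs <;> norm_num)

lemma levelInteraction_le {m : ℕ} {lam : ℕ → ℝ} (hlam : ∀ k ∈ Finset.Icc 1 m, 0 ≤ lam k)
    (a b : ℕ) : levelInteraction m lam a b ≤ ∑ k ∈ Finset.Icc 1 m, lam k :=
  Finset.sum_le_sum fun k hk => mul_le_of_le_one_right (hlam k hk) (by split_ifs <;> norm_num)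

lemma weighted_sortedSeq_le (n L m : ℕ) (lam : ℕ → ℝ) (hlam : ∀ k ∈ Finset.Icc 1 m, 0 ≤ lam k)
    (c : ℕ → ℝ) (hc : Antitone c) (hc0 : ∀ d, 0 ≤ c d) (S : ℕ → ℕ) (hS : ∀ i, S i ≤ L) :
    ∑ i ∈ Finset.range n, ∑ j ∈ Finset.range n, c (Nat.dist i j) *
        levelInteraction m lam (sortedSeq n L S i) (sortedSeq n L S j)
      ≤ ∑ i ∈ Finset.range n, ∑ j ∈ Finset.range n, c (Nat.dist i j) *
        levelInteraction m lam (S i) (S j) := by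
  simp only [← Fin.sum_univ_eq_sum_range]
  refine weighted_le_of_sorted n m lam hlam c hc hc0 (fun i => S i) (fun i => sortedSeq n L S i)
    (fun i j hij => sortedSeq_mono n L S hij) fun l => ?_
  rw [Fin.sum_univ_eq_sum_range (fun i => if l ≤ S i then 1 else 0) n,
    Fin.sum_univ_eq_sum_range (fun i => if l ≤ sortedSeq n L S i then 1 else 0) n,
    ← Finset.card_filter, ← Finset.card_filter]
  exact (levelCount_sortedSeq n L S hS l).symm

/-- Index of the cell of the grid `a + h ℕ` containing `x`. -/
noncomputable def cellIdx (a h x : ℝ) : ℕ := ⌊(x - a) / h⌋₊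

lemma measurable_cellIdx (a h : ℝ) : Measurable (cellIdx a h) := by
  unfold cellIdx
  exact Nat.measurable_floor.comp ((measurable_id.sub_const a).div_const h)

lemma cellIdx_eq_iff {a h x : ℝ} (hh : 0 < h) (hx : a ≤ x) (i : ℕ) :
    cellIdx a h x = i ↔ a + i * h ≤ x ∧ x < a + (i + 1) * h := by
  unfold cellIdx
  rw [Nat.floor_eq_iff (div_nonneg (sub_nonneg.2 hx) hh.le), le_div_iff₀ hh, div_lt_iff₀ hh]
  constructor <;> rintro ⟨h1, h2⟩ <;> constructor <;> linarith

lemma volume_cell {a b : ℝ} (hab : a < b) {n : ℕ} (hn : 0 < n) (i : ℕ) :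
    volume.restrict (Ioo a b) (cellIdx a ((b - a) / n) ⁻¹' {i})
      = if i < n then ENNReal.ofReal ((b - a) / n) else 0 := by
  have hn' : (0 : ℝ) < n := by exact_mod_cast hn
  have hh : 0 < (b - a) / n := div_pos (sub_pos.2 hab) hn'
  have hnh : n * ((b - a) / n) = b - a := by field_simp
  rw [Measure.restrict_apply (measurable_cellIdx _ _ (measurableSet_singleton i))]
  set h := (b - a) / n
  have hsub : cellIdx a h ⁻¹' {i} ∩ Ioo a b ⊆ Ico (a + i * h) (a + (i + 1) * h) := by
    rintro x ⟨hx, hx'⟩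
    exact (cellIdx_eq_iff hh hx'.1.le i).1 hx
  split_ifs with hi
  · have hin : ((i : ℝ) + 1) * h ≤ n * h :=
      mul_le_mul_of_nonneg_right (by exact_mod_cast hi) hh.le
    have hi0 : 0 ≤ (i : ℝ) * h := by positivity
    have hsup : Ioo (a + i * h) (a + (i + 1) * h) ⊆ cellIdx a h ⁻¹' {i} ∩ Ioo a b := by
      rintro x ⟨h1, h2⟩
      exact ⟨(cellIdx_eq_iff hh (by linarith) i).2 ⟨h1.le, h2⟩, by linarith, by linarith⟩
    have e : a + (i + 1) * h - (a + i * h) = h := by ring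
    refine le_antisymm ?_ ?_
    · refine (measure_mono hsub).trans ?_
      rw [Real.volume_Ico, e]
    · refine le_trans ?_ (measure_mono hsup)
      rw [Real.volume_Ioo, e]
  · have hin : (n : ℝ) * h ≤ i * h :=
      mul_le_mul_of_nonneg_right (by exact_mod_cast not_lt.1 hi) hh.le
    convert measure_empty (μ := volume)
    rw [Set.eq_empty_iff_forall_notMem]
    intro x hx
    have h1 := hsub hx
    have h2 := hx.2.2
    have h3 := h1.1
    linarith

lemma lintegral_cellIdx {a b : ℝ} (hab : a < b) {n : ℕ} (hn : 0 < n) (g : ℕ → ℝ≥0∞) :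
    ∫⁻ x in Ioo a b, g (cellIdx a ((b - a) / n) x)
      = ∑ i ∈ Finset.range n, ENNReal.ofReal ((b - a) / n) * g i := by
  rw [← lintegral_map (f := g) (Measurable.of_discrete) (measurable_cellIdx _ _),
    lintegral_countable', tsum_eq_sum (s := Finset.range n)]
  · refine Finset.sum_congr rfl fun i hi => ?_
    rw [Measure.map_apply (measurable_cellIdx _ _) (measurableSet_singleton i),
      volume_cell hab hn, if_pos (Finset.mem_range.1 hi), mul_comm]
  · intro i hi
    rw [Measure.map_apply (measurable_cellIdx _ _) (measurableSet_singleton i),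
      volume_cell hab hn, if_neg (by simpa using hi), mul_zero]

lemma measurable_comp_cellIdx (a h : ℝ) (f : ℕ → ℕ → ℝ≥0∞) :
    Measurable fun z : ℝ × ℝ => f (cellIdx a h z.1) (cellIdx a h z.2) := by
  have : Measurable (Function.uncurry f) := Measurable.of_discrete
  exact this.comp (((measurable_cellIdx a h).comp measurable_fst).prodMk
    ((measurable_cellIdx a h).comp measurable_snd))

lemma lintegral_cellIdx_prod {a b : ℝ} (hab : a < b) {n : ℕ} (hn : 0 < n)
    (f : ℕ → ℕ → ℝ) (hf : ∀ i j, 0 ≤ f i j) :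
    ∫⁻ z, ENNReal.ofReal (f (cellIdx a ((b - a) / n) z.1) (cellIdx a ((b - a) / n) z.2))
        ∂((volume.restrict (Ioo a b)).prod (volume.restrict (Ioo a b)))
      = ENNReal.ofReal ((b - a) / n) * (ENNReal.ofReal ((b - a) / n) *
        ENNReal.ofReal (∑ i ∈ Finset.range n, ∑ j ∈ Finset.range n, f i j)) := by
  rw [lintegral_prod _ (measurable_comp_cellIdx a _ fun i j => ENNReal.ofReal (f i j)).aemeasurable]
  simp only
  simp_rw [fun x => lintegral_cellIdx hab hn
    (fun j => ENNReal.ofReal (f (cellIdx a ((b - a) / n) x) j))]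
  rw [lintegral_cellIdx hab hn (fun i => ∑ j ∈ Finset.range n,
    ENNReal.ofReal ((b - a) / n) * ENNReal.ofReal (f i j))]
  rw [← Finset.mul_sum]
  congr 1
  simp_rw [← Finset.mul_sum]
  congr 1
  rw [ENNReal.ofReal_sum_of_nonneg fun i _ => Finset.sum_nonneg fun j _ => hf i j]
  exact Finset.sum_congr rfl fun i _ => (ENNReal.ofReal_sum_of_nonneg fun j _ => hf i j).symm

/-! ### Continuous kernels on an interval -/

/-- The nondecreasing rearrangement on `(a, b)` of a function with values in `{0, …, L}` whose
super-level set at level `l` has measure `μ l`: it reaches level `l` on an interval of length `μ l`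
at the right end of `(a, b)`. -/
noncomputable def sortedFun (b : ℝ) (L : ℕ) (μ : ℕ → ℝ) (x : ℝ) : ℕ :=
  open Classical in ((Finset.range L).filter fun j => b ≤ x + μ (j + 1)).card

lemma succ_le_sortedFun_iff (b : ℝ) (L : ℕ) (μ : ℕ → ℝ) (hμ : Antitone μ) (x : ℝ) (l : ℕ) :
    l + 1 ≤ sortedFun b L μ x ↔ l < L ∧ b ≤ x + μ (l + 1) := by
  classical
  exact succ_le_card_filter_iff L _ (fun j j' hj h =>
    h.trans (add_le_add_right (hμ (Nat.add_le_add_right hj 1)) x)) l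

lemma sortedFun_mono (b : ℝ) (L : ℕ) (μ : ℕ → ℝ) : Monotone (sortedFun b L μ) := by
  classical
  intro x x' hx
  refine Finset.card_le_card fun j hj => ?_
  simp only [Finset.mem_filter] at hj ⊢
  exact ⟨hj.1, by linarith⟩

/-- Measure in `(a, b)` of the super-level set `{l ≤ W}`. -/
noncomputable def levelMeasure (a b : ℝ) (W : ℝ → ℕ) (l : ℕ) : ℝ :=
  (volume.restrict (Ioo a b) {x | l ≤ W x}).toReal

lemma levelMeasure_anti (a b : ℝ) (W : ℝ → ℕ) : Antitone (levelMeasure a b W) := by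
  intro l l' h
  exact ENNReal.toReal_mono (measure_ne_top _ _) (measure_mono fun x hx => h.trans hx)

lemma levelMeasure_cellIdx {a b : ℝ} (hab : a < b) {n : ℕ} (hn : 0 < n) (S : ℕ → ℕ) (l : ℕ) :
    levelMeasure a b (fun x => S (cellIdx a ((b - a) / n) x)) l
      = (b - a) / n * levelCount n S l := by
  have hh : 0 ≤ (b - a) / n := div_nonneg (sub_nonneg.2 hab.le) (Nat.cast_nonneg n)
  have hm : MeasurableSet {x | l ≤ S (cellIdx a ((b - a) / n) x)} :=
    measurable_cellIdx a ((b - a) / n) (MeasurableSet.of_discrete (s := {i | l ≤ S i}))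
  have h1 := lintegral_cellIdx hab hn (fun i => if l ≤ S i then 1 else 0)
  have h2 : ∫⁻ x in Ioo a b, (fun i => if l ≤ S i then (1 : ℝ≥0∞) else 0)
        (cellIdx a ((b - a) / n) x)
      = volume.restrict (Ioo a b) {x | l ≤ S (cellIdx a ((b - a) / n) x)} := by
    rw [← lintegral_indicator_one hm]
    refine lintegral_congr fun x => ?_
    simp [Set.indicator_apply]
  unfold levelMeasure
  rw [← h2, h1, ← Finset.mul_sum, ← Finset.sum_filter, Finset.sum_const, nsmul_eq_mul, mul_one,
    ENNReal.toReal_mul, ENNReal.toReal_ofReal hh]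
  simp [levelCount]

lemma tendsto_levelMeasure (a b : ℝ) (Wn : ℕ → ℝ → ℕ) (W : ℝ → ℕ) (hWn : ∀ n, Measurable (Wn n))
    (hW : Measurable W) (h : ∀ᵐ x ∂(volume.restrict (Ioo a b)), ∀ᶠ n in atTop, Wn n x = W x)
    (l : ℕ) : Tendsto (fun n => levelMeasure a b (Wn n) l) atTop (𝓝 (levelMeasure a b W l)) := by
  have key : ∀ U : ℝ → ℕ, Measurable U → volume.restrict (Ioo a b) {x | l ≤ U x}
      = ∫⁻ x in Ioo a b, (if l ≤ U x then 1 else 0) := by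
    intro U hU
    have hm : MeasurableSet {x | l ≤ U x} := hU (MeasurableSet.of_discrete (s := {i | l ≤ i}))
    rw [← lintegral_indicator_one hm]
    refine lintegral_congr fun x => ?_
    simp [Set.indicator_apply]
  have hmeas : ∀ U : ℝ → ℕ, Measurable U → Measurable fun x => if l ≤ U x then (1 : ℝ≥0∞) else 0 :=
    fun U hU => (Measurable.of_discrete (f := fun i : ℕ => if l ≤ i then (1 : ℝ≥0∞) else 0)).comp hU
  unfold levelMeasure
  refine (ENNReal.tendsto_toReal (measure_ne_top _ _)).comp ?_
  rw [key W hW]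
  simp_rw [fun n => key (Wn n) (hWn n)]
  refine tendsto_lintegral_of_dominated_convergence (fun _ => 1) (fun n => hmeas _ (hWn n))
    (fun n => Eventually.of_forall fun x => ?_) (by simp) ?_
  · dsimp only
    split_ifs <;> simp
  · filter_upwards [h] with x hx
    exact tendsto_const_nhds.congr' (hx.mono fun n hn => by simp only [hn])

lemma tendsto_mesh {a b : ℝ} (hab : a < b) :
    Tendsto (fun n : ℕ => (b - a) / ((n + 1 : ℕ) : ℝ)) atTop (𝓝[>] 0) := by
  refine tendsto_nhdsWithin_iff.2 ⟨?_, Eventually.of_forall fun n =>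
    div_pos (sub_pos.2 hab) (by positivity)⟩
  exact (tendsto_const_div_atTop_nhds_zero_nat (b - a)).comp (tendsto_add_atTop_nat 1)

lemma cellIdx_bounds {a h x : ℝ} (hh : 0 < h) (hx : a ≤ x) :
    a + cellIdx a h x * h ≤ x ∧ x < a + (cellIdx a h x + 1) * h :=
  (cellIdx_eq_iff hh hx _).1 rfl

lemma tendsto_cellIdx {a b : ℝ} (hab : a < b) {x : ℝ} (hx : a ≤ x) :
    Tendsto (fun n : ℕ => (b - a) / ((n + 1 : ℕ) : ℝ) *
      cellIdx a ((b - a) / ((n + 1 : ℕ) : ℝ)) x) atTop (𝓝 (x - a)) := by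
  have hm := (tendsto_mesh hab)
  have h0 := tendsto_nhds_of_tendsto_nhdsWithin hm
  have h1 : Tendsto (fun n : ℕ => x - a - (b - a) / ((n + 1 : ℕ) : ℝ)) atTop (𝓝 (x - a)) := by
    simpa using h0.const_sub (x - a)
  refine tendsto_of_tendsto_of_tendsto_of_le_of_le h1 tendsto_const_nhds ?_ ?_ <;> intro n <;>
  · have := cellIdx_bounds (div_pos (sub_pos.2 hab) (by positivity) :
      0 < (b - a) / ((n + 1 : ℕ) : ℝ)) hx
    simp only
    nlinarith [this.1, this.2]

/-- Sequence of cell values approximating `W` on the grid of mesh `h`: the rounded average of `W`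
over each cell, capped at `L`. -/
noncomputable def cellAvg (a h : ℝ) (L : ℕ) (W : ℝ → ℕ) (i : ℕ) : ℕ :=
  min L ⌊(⨍ y in Metric.closedBall (a + (i + 1 / 2) * h) (h / 2), (W y : ℝ)) + 1 / 2⌋₊

/-- By Lebesgue differentiation the averages over the cells containing `x` converge to the integer
`W x`, hence after rounding they are eventually equal to it. -/
lemma eventually_cellAvg_eq {a b : ℝ} (hab : a < b) (L : ℕ) (W : ℝ → ℕ) (hW : Measurable W)
    (hL : ∀ x, W x ≤ L) :
    ∀ᵐ x ∂(volume.restrict (Ioo a b)), ∀ᶠ n : ℕ in atTop,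
      cellAvg a ((b - a) / ((n + 1 : ℕ) : ℝ)) L W
        (cellIdx a ((b - a) / ((n + 1 : ℕ) : ℝ)) x) = W x := by
  have hWr : Measurable fun x => (W x : ℝ) := (Measurable.of_discrete (f := Nat.cast)).comp hW
  have hloc : LocallyIntegrable (fun x => (W x : ℝ)) volume := by
    refine (locallyIntegrable_const (L : ℝ)).mono hWr.aestronglyMeasurable ?_
    refine Eventually.of_forall fun x => ?_
    simpa using hL x
  have hae := ae_restrict_of_ae (s := Ioo a b)
    (IsUnifLocDoublingMeasure.ae_tendsto_average volume hloc 1)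
  filter_upwards [hae, ae_restrict_mem measurableSet_Ioo] with x hx hxm
  have hm := tendsto_mesh hab
  set h : ℕ → ℝ := fun n => (b - a) / ((n + 1 : ℕ) : ℝ) with hh
  have hpos : ∀ n, 0 < h n := fun n => div_pos (sub_pos.2 hab) (by positivity)
  have hm2 : Tendsto (fun n => h n / 2) atTop (𝓝[>] 0) := by
    refine tendsto_nhdsWithin_iff.2 ⟨?_, Eventually.of_forall fun n => half_pos (hpos n)⟩
    simpa using (tendsto_nhds_of_tendsto_nhdsWithin hm).div_const 2
  have hlim := hx (l := atTop) (fun n => a + (cellIdx a (h n) x + 1 / 2) * h n)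
    (fun n => h n / 2) hm2 (Eventually.of_forall fun n => by
      have := cellIdx_bounds (hpos n) hxm.1.le
      rw [Metric.mem_closedBall, Real.dist_eq, abs_le]
      constructor <;> nlinarith [this.1, this.2])
  have hev := hlim.eventually (Ioo_mem_nhds (by linarith : (W x : ℝ) - 1 / 2 < W x)
    (by linarith : (W x : ℝ) < W x + 1 / 2))
  filter_upwards [hev] with n hn
  unfold cellAvg
  have : ⌊(⨍ y in Metric.closedBall (a + (cellIdx a (h n) x + 1 / 2) * h n) (h n / 2), (W y : ℝ))
      + 1 / 2⌋₊ = W x := by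
    rw [Nat.floor_eq_iff]
    · constructor <;> linarith [hn.1, hn.2]
    · have : (0 : ℝ) ≤ W x := Nat.cast_nonneg _
      linarith [hn.1]
  change min L ⌊(⨍ y in Metric.closedBall (a + (cellIdx a (h n) x + 1 / 2) * h n) (h n / 2),
    (W y : ℝ)) + 1 / 2⌋₊ = W x
  rw [this, min_eq_right (hL x)]

/-- The sorted step approximations converge to the sorted function, away from its finitely many
jumps. -/
lemma eventually_sortedSeq_eq {a b : ℝ} (hab : a < b) (L : ℕ) (W : ℝ → ℕ) (S : ℕ → ℕ → ℕ)
    (hlev : ∀ l, Tendsto (fun n : ℕ => (b - a) / ((n + 1 : ℕ) : ℝ) * levelCount (n + 1) (S n) l)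
      atTop (𝓝 (levelMeasure a b W l))) :
    ∀ᵐ x ∂(volume.restrict (Ioo a b)), ∀ᶠ n : ℕ in atTop,
      sortedSeq (n + 1) L (S n) (cellIdx a ((b - a) / ((n + 1 : ℕ) : ℝ)) x)
        = sortedFun b L (levelMeasure a b W) x := by
  have hne : ∀ᵐ x ∂(volume.restrict (Ioo a b)), ∀ j : ℕ, x ≠ b - levelMeasure a b W (j + 1) :=
    ae_restrict_of_ae (ae_all_iff.2 fun j => Measure.ae_ne volume _)
  filter_upwards [hne, ae_restrict_mem measurableSet_Ioo] with x hx hxm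
  have hall : ∀ j ∈ Finset.range L, ∀ᶠ n : ℕ in atTop,
      (n + 1 ≤ cellIdx a ((b - a) / ((n + 1 : ℕ) : ℝ)) x + levelCount (n + 1) (S n) (j + 1) ↔
        b ≤ x + levelMeasure a b W (j + 1)) := by
    intro j _
    have hlim := (tendsto_cellIdx hab hxm.1.le).add (hlev (j + 1))
    have hconv : ∀ n : ℕ, (n + 1 ≤ cellIdx a ((b - a) / ((n + 1 : ℕ) : ℝ)) x
        + levelCount (n + 1) (S n) (j + 1) ↔
        b - a ≤ (b - a) / ((n + 1 : ℕ) : ℝ) * cellIdx a ((b - a) / ((n + 1 : ℕ) : ℝ)) x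
          + (b - a) / ((n + 1 : ℕ) : ℝ) * levelCount (n + 1) (S n) (j + 1)) := by
      intro n
      have hn : (0 : ℝ) < ((n + 1 : ℕ) : ℝ) := by positivity
      have hpos : 0 < (b - a) / ((n + 1 : ℕ) : ℝ) := div_pos (sub_pos.2 hab) hn
      have e : b - a = (b - a) / ((n + 1 : ℕ) : ℝ) * ((n + 1 : ℕ) : ℝ) := by field_simp
      rw [← mul_add]
      conv_rhs => lhs; rw [e]
      rw [mul_le_mul_iff_right₀ hpos]
      norm_cast
    -- the defining inequality is strict in the limit, hence decided for all large `n`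
    rcases lt_or_gt_of_ne (show b ≠ x + levelMeasure a b W (j + 1) from
      fun h => hx j (by linarith)) with hlt | hgt
    · have := hlim.eventually (lt_mem_nhds (show b - a < x - a + levelMeasure a b W (j + 1) by
        linarith))
      filter_upwards [this] with n hn
      exact ⟨fun _ => hlt.le, fun _ => (hconv n).2 hn.le⟩
    · have := hlim.eventually (gt_mem_nhds (show x - a + levelMeasure a b W (j + 1) < b - a by
        linarith))
      filter_upwards [this] with n hn
      exact ⟨fun h => absurd ((hconv n).1 h) (not_le.2 hn), fun h => absurd h (not_le.2 hgt)⟩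
  have hall' := (Filter.eventually_all_finset _).2 hall
  filter_upwards [hall'] with n hn
  unfold sortedSeq sortedFun
  exact congrArg Finset.card (Finset.filter_congr hn)

lemma natDist_cast (i j : ℕ) : (Nat.dist i j : ℝ) = |(j : ℝ) - i| := by
  rcases le_total i j with h | h
  · rw [Nat.dist_eq_sub_of_le h, Nat.cast_sub h, abs_of_nonneg (by simpa using h)]
  · rw [Nat.dist_eq_sub_of_le_right h, Nat.cast_sub h, abs_of_nonpos (by simpa using h)]
    ring

/-- Rearrangement inequality on `(a, b)` for a continuous kernel: discretise on finer and finer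
grids and pass to the limit by dominated convergence on both sides. -/
theorem lintegral_sortedFun_le {a b : ℝ} (hab : a < b) (m : ℕ) (lam : ℕ → ℝ)
    (hlam : ∀ k ∈ Finset.Icc 1 m, 0 ≤ lam k) (K : ℝ → ℝ) (hK : Continuous K)
    (hanti : AntitoneOn K (Ici 0)) (hK0 : ∀ d, 0 ≤ K d) (L : ℕ) (W : ℝ → ℕ) (hW : Measurable W)
    (hL : ∀ x, W x ≤ L) :
    ∫⁻ z, ENNReal.ofReal (K |z.2 - z.1| * levelInteraction m lam
        (sortedFun b L (levelMeasure a b W) z.1) (sortedFun b L (levelMeasure a b W) z.2))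
        ∂((volume.restrict (Ioo a b)).prod (volume.restrict (Ioo a b)))
      ≤ ∫⁻ z, ENNReal.ofReal (K |z.2 - z.1| * levelInteraction m lam (W z.1) (W z.2))
        ∂((volume.restrict (Ioo a b)).prod (volume.restrict (Ioo a b))) := by
  set h : ℕ → ℝ := fun n => (b - a) / ((n + 1 : ℕ) : ℝ) with hh
  have hpos : ∀ n, 0 < h n := fun n => div_pos (sub_pos.2 hab) (by positivity)
  have hh0 : Tendsto h atTop (𝓝 0) := tendsto_nhds_of_tendsto_nhdsWithin (tendsto_mesh hab)
  set S : ℕ → ℕ → ℕ := fun n => cellAvg a (h n) L W with hS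
  have hSL : ∀ n i, S n i ≤ L := fun n i => min_le_left _ _
  -- any distance within `O(h n)` of the distance between the two cells would serve here
  set c : ℕ → ℕ → ℝ := fun n d => K ((d + 1) * h n) with hc
  have hmem : ∀ n (d : ℕ), ((d : ℝ) + 1) * h n ∈ Ici (0 : ℝ) := fun n d =>
    mul_nonneg (by positivity) (hpos n).le
  have hcanti : ∀ n, Antitone (c n) := fun n d d' hd =>
    hanti (hmem n d) (hmem n d') (mul_le_mul_of_nonneg_right (by gcongr) (hpos n).le)
  have hSW := eventually_cellAvg_eq hab L W hW hL
  have hlev : ∀ l, Tendsto (fun n : ℕ => h n * levelCount (n + 1) (S n) l)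
      atTop (𝓝 (levelMeasure a b W l)) := by
    intro l
    have := tendsto_levelMeasure a b (fun n x => S n (cellIdx a (h n) x)) W
      (fun n => (Measurable.of_discrete (f := S n)).comp (measurable_cellIdx a (h n))) hW hSW l
    refine this.congr fun n => ?_
    exact levelMeasure_cellIdx hab (Nat.succ_pos n) (S n) l
  have hTV := eventually_sortedSeq_eq hab L W S hlev
  have hlim : ∀ (R : ℕ → ℕ → ℕ) (U : ℝ → ℕ),
      (∀ᵐ x ∂(volume.restrict (Ioo a b)), ∀ᶠ n : ℕ in atTop, R n (cellIdx a (h n) x) = U x) →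
      Tendsto (fun n => ∫⁻ z, ENNReal.ofReal (c n (Nat.dist (cellIdx a (h n) z.1)
          (cellIdx a (h n) z.2)) * levelInteraction m lam (R n (cellIdx a (h n) z.1))
            (R n (cellIdx a (h n) z.2)))
        ∂((volume.restrict (Ioo a b)).prod (volume.restrict (Ioo a b)))) atTop
      (𝓝 (∫⁻ z, ENNReal.ofReal (K |z.2 - z.1| * levelInteraction m lam (U z.1) (U z.2))
        ∂((volume.restrict (Ioo a b)).prod (volume.restrict (Ioo a b))))) := by
    intro R U hRU
    refine tendsto_lintegral_of_dominated_convergence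
      (fun _ => ENNReal.ofReal (K 0 * ∑ k ∈ Finset.Icc 1 m, lam k)) (fun n => ?_) (fun n => ?_) ?_ ?_
    · exact measurable_comp_cellIdx a (h n) fun i j => ENNReal.ofReal (c n (Nat.dist i j) *
        levelInteraction m lam (R n i) (R n j))
    · refine Eventually.of_forall fun z => ENNReal.ofReal_le_ofReal ?_
      exact mul_le_mul (hanti (mem_Ici.2 le_rfl) (hmem n _) (hmem n _))
        (levelInteraction_le hlam _ _) (levelInteraction_nonneg hlam _ _) (hK0 _)
    · rw [lintegral_const]
      exact ENNReal.mul_ne_top ENNReal.ofReal_ne_top (measure_ne_top _ _)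
    · have hgood : ∀ᵐ x ∂(volume.restrict (Ioo a b)), a ≤ x ∧
          ∀ᶠ n : ℕ in atTop, R n (cellIdx a (h n) x) = U x := by
        filter_upwards [hRU, ae_restrict_mem measurableSet_Ioo] with x hx hxm
        exact ⟨hxm.1.le, hx⟩
      have g1 := (Measure.quasiMeasurePreserving_fst (μ := volume.restrict (Ioo a b))
        (ν := volume.restrict (Ioo a b))).ae hgood
      have g2 := (Measure.quasiMeasurePreserving_snd (μ := volume.restrict (Ioo a b))
        (ν := volume.restrict (Ioo a b))).ae hgood
      filter_upwards [g1, g2] with z h1 h2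
      have hd : Tendsto (fun n => ((Nat.dist (cellIdx a (h n) z.1) (cellIdx a (h n) z.2) : ℝ) + 1)
          * h n) atTop (𝓝 |z.2 - z.1|) := by
        have := (((tendsto_cellIdx hab h2.1).sub (tendsto_cellIdx hab h1.1)).abs).add hh0
        rw [add_zero, show z.2 - a - (z.1 - a) = z.2 - z.1 by ring] at this
        refine this.congr fun n => ?_
        rw [natDist_cast, ← mul_sub, abs_mul, abs_of_pos (hpos n)]
        ring
      have hKd : Tendsto (fun n => c n (Nat.dist (cellIdx a (h n) z.1) (cellIdx a (h n) z.2)))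
          atTop (𝓝 (K |z.2 - z.1|)) := (hK.tendsto _).comp hd
      refine (ENNReal.continuous_ofReal.tendsto _).comp (hKd.mul ?_)
      refine tendsto_const_nhds.congr' ?_
      filter_upwards [h1.2, h2.2] with n e1 e2
      rw [e1, e2]
  refine le_of_tendsto_of_tendsto' (hlim (fun n => sortedSeq (n + 1) L (S n)) _ hTV)
    (hlim S W hSW) fun n => ?_
  have hd := weighted_sortedSeq_le (n + 1) L m lam hlam (c n) (hcanti n) (fun d => hK0 _) (S n)
    (hSL n)
  have e1 := lintegral_cellIdx_prod hab (Nat.succ_pos n) (fun i j => c n (Nat.dist i j) *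
    levelInteraction m lam (sortedSeq (n + 1) L (S n) i) (sortedSeq (n + 1) L (S n) j))
    (fun i j => mul_nonneg (hK0 _) (levelInteraction_nonneg hlam _ _))
  have e2 := lintegral_cellIdx_prod hab (Nat.succ_pos n) (fun i j => c n (Nat.dist i j) *
    levelInteraction m lam (S n i) (S n j))
    (fun i j => mul_nonneg (hK0 _) (levelInteraction_nonneg hlam _ _))
  refine (e1.trans_le ?_).trans e2.symm.le
  gcongr

/-! ### The singular kernel and the segmentation -/

/-- `sortedFun` is equimeasurable with `W`: super-level sets have the same measure. -/
lemma measure_superlevel_sortedFun {a b : ℝ} (hab : a < b) (L : ℕ) (W : ℝ → ℕ)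
    (hL : ∀ x, W x ≤ L) (l : ℕ) :
    volume.restrict (Ioo a b) {x | l ≤ sortedFun b L (levelMeasure a b W) x}
      = volume.restrict (Ioo a b) {x | l ≤ W x} := by
  rcases l with _ | l
  · simp
  · simp only [succ_le_sortedFun_iff b L _ (levelMeasure_anti a b W)]
    by_cases hl : l < L
    · set μ := levelMeasure a b W (l + 1) with hμ
      have hμle : μ ≤ b - a := by
        have h1 : volume.restrict (Ioo a b) {x | l + 1 ≤ W x} ≤ ENNReal.ofReal (b - a) := by
          refine (measure_mono (subset_univ _)).trans ?_
          rw [Measure.restrict_apply_univ, Real.volume_Ioo]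
        exact ENNReal.toReal_le_of_le_ofReal (by linarith) h1
      have hW : volume.restrict (Ioo a b) {x | l + 1 ≤ W x} = ENNReal.ofReal μ :=
        (ENNReal.ofReal_toReal (measure_ne_top _ _)).symm
      have hset : {x : ℝ | l < L ∧ b ≤ x + μ} = Ici (b - μ) := by
        ext x
        simp only [mem_ofPred_eq, hl, true_and, mem_Ici, sub_le_iff_le_add]
      rw [hW, hset, Measure.restrict_apply measurableSet_Ici]
      refine le_antisymm ?_ ?_
      · have : Ici (b - μ) ∩ Ioo a b ⊆ Ico (b - μ) b := fun x hx => ⟨hx.1, hx.2.2⟩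
        refine (measure_mono this).trans ?_
        rw [Real.volume_Ico, _root_.sub_sub_cancel]
      · have : Ioo (b - μ) b ⊆ Ici (b - μ) ∩ Ioo a b :=
          fun x hx => ⟨hx.1.le, by linarith [hx.1], hx.2⟩
        refine le_trans ?_ (measure_mono this)
        rw [Real.volume_Ioo, _root_.sub_sub_cancel]
    · have h1 : {x : ℝ | l + 1 ≤ W x} = ∅ := by
        ext x
        have := hL x
        simp
        omega
      rw [h1]
      simp [hl]

lemma measurable_sortedFun (b : ℝ) (L : ℕ) (μ : ℕ → ℝ) : Measurable (sortedFun b L μ) :=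
  (sortedFun_mono b L μ).measurable

lemma measure_level_sortedFun {a b : ℝ} (hab : a < b) (L : ℕ) (W : ℝ → ℕ) (hW : Measurable W)
    (hL : ∀ x, W x ≤ L) (l : ℕ) :
    volume.restrict (Ioo a b) {x | sortedFun b L (levelMeasure a b W) x = l}
      = volume.restrict (Ioo a b) {x | W x = l} := by
  have key : ∀ U : ℝ → ℕ, Measurable U → volume.restrict (Ioo a b) {x | U x = l}
      = volume.restrict (Ioo a b) {x | l ≤ U x}
        - volume.restrict (Ioo a b) {x | l + 1 ≤ U x} := by
    intro U hU
    have hm : MeasurableSet {x | l + 1 ≤ U x} :=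
      hU (MeasurableSet.of_discrete (s := {i | l + 1 ≤ i}))
    have hsub : {x | l + 1 ≤ U x} ⊆ {x | l ≤ U x} :=
      fun x (hx : l + 1 ≤ U x) => (Nat.le_succ l).trans hx
    rw [← measure_sdiff hsub hm.nullMeasurableSet (measure_ne_top _ _)]
    congr 1
    ext x
    simp only [mem_ofPred_eq, Set.mem_sdiff]
    omega
  rw [key _ (measurable_sortedFun _ _ _), key _ hW, measure_superlevel_sortedFun hab L W hL,
    measure_superlevel_sortedFun hab L W hL]

lemma measurable_levelInteraction (m : ℕ) (lam : ℕ → ℝ) {U : ℝ → ℕ} (hU : Measurable U) :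
    Measurable fun z : ℝ × ℝ => levelInteraction m lam (U z.1) (U z.2) := by
  have : Measurable (Function.uncurry (levelInteraction m lam)) := Measurable.of_discrete
  exact this.comp ((hU.comp measurable_fst).prodMk (hU.comp measurable_snd))

lemma levelInteraction_self (m : ℕ) (lam : ℕ → ℝ) (i : ℕ) : levelInteraction m lam i i = 0 := by
  simp [levelInteraction, Close]

lemma measurable_energy (m : ℕ) (lam : ℕ → ℝ) (p δ : ℝ) {U : ℝ → ℕ} (hU : Measurable U) :
    Measurable fun z : ℝ × ℝ => ENNReal.ofReal
      (levelInteraction m lam (U z.1) (U z.2) * δ ^ p / |z.2 - z.1| ^ (1 + p)) := by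
  have := measurable_levelInteraction m lam hU
  fun_prop

/-- Rearrangement inequality for the singular kernel `δ ^ p / |y - x| ^ (1 + p)`, as the limit of
the continuous kernels `δ ^ p / (|y - x| + ε) ^ (1 + p)`. -/
theorem energy_sortedFun_le {a b : ℝ} (hab : a < b) (m : ℕ) (lam : ℕ → ℝ)
    (hlam : ∀ k ∈ Finset.Icc 1 m, 0 ≤ lam k) (p δ : ℝ) (hδ : 0 < δ) (hp : 1 ≤ p)
    (L : ℕ) (W : ℝ → ℕ) (hW : Measurable W) (hL : ∀ x, W x ≤ L) :
    ∫⁻ z, ENNReal.ofReal (levelInteraction m lam (sortedFun b L (levelMeasure a b W) z.1)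
        (sortedFun b L (levelMeasure a b W) z.2) * δ ^ p / |z.2 - z.1| ^ (1 + p))
        ∂((volume.restrict (Ioo a b)).prod (volume.restrict (Ioo a b)))
      ≤ ∫⁻ z, ENNReal.ofReal (levelInteraction m lam (W z.1) (W z.2) * δ ^ p
          / |z.2 - z.1| ^ (1 + p))
        ∂((volume.restrict (Ioo a b)).prod (volume.restrict (Ioo a b))) := by
  set V := sortedFun b L (levelMeasure a b W) with hV
  have hVm : Measurable V := measurable_sortedFun _ _ _
  set K : ℕ → ℝ → ℝ := fun n d => δ ^ p / (|d| + 1 / ((n : ℝ) + 1)) ^ (1 + p) with hKdef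
  have hδp : 0 ≤ δ ^ p := Real.rpow_nonneg hδ.le p
  have heps : ∀ n : ℕ, 0 < 1 / ((n : ℝ) + 1) := fun n => by positivity
  have hbase : ∀ (n : ℕ) (d : ℝ), 0 < |d| + 1 / ((n : ℝ) + 1) := fun n d =>
    add_pos_of_nonneg_of_pos (abs_nonneg d) (heps n)
  have hKc : ∀ n, Continuous (K n) := by
    intro n
    refine continuous_const.div ?_ fun d => (Real.rpow_pos_of_pos (hbase n d) _).ne'
    exact (continuous_abs.add continuous_const).rpow_const fun d => Or.inr (by linarith)
  have hK0 : ∀ n d, 0 ≤ K n d := fun n d =>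
    div_nonneg hδp (Real.rpow_nonneg (hbase n d).le _)
  have hKanti : ∀ n, AntitoneOn (K n) (Ici 0) := by
    intro n d hd d' hd' hdd
    refine div_le_div_of_nonneg_left hδp (Real.rpow_pos_of_pos (hbase n d) _) ?_
    refine Real.rpow_le_rpow (hbase n d).le ?_ (by linarith)
    rw [abs_of_nonneg hd, abs_of_nonneg hd']
    linarith
  have hmeas : ∀ n, Measurable fun z : ℝ × ℝ => ENNReal.ofReal
      (K n |z.2 - z.1| * levelInteraction m lam (V z.1) (V z.2)) := by
    intro n
    have h1 := measurable_levelInteraction m lam hVm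
    have h2 := (hKc n).measurable
    fun_prop
  calc ∫⁻ z, ENNReal.ofReal (levelInteraction m lam (V z.1) (V z.2) * δ ^ p
          / |z.2 - z.1| ^ (1 + p))
        ∂((volume.restrict (Ioo a b)).prod (volume.restrict (Ioo a b)))
      ≤ ∫⁻ z, liminf (fun n => ENNReal.ofReal
          (K n |z.2 - z.1| * levelInteraction m lam (V z.1) (V z.2))) atTop
        ∂((volume.restrict (Ioo a b)).prod (volume.restrict (Ioo a b))) := by
        refine lintegral_mono fun z => ?_
        rcases eq_or_ne z.1 z.2 with hz | hz
        -- on the diagonal the interaction vanishes, so the junk value of the quotient is harmless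
        · simp [hz, levelInteraction_self]
        · have hd : 0 < |z.2 - z.1| := abs_pos.2 (sub_ne_zero.2 hz.symm)
          have hlim : Tendsto (fun n => K n |z.2 - z.1|) atTop
              (𝓝 (δ ^ p / |z.2 - z.1| ^ (1 + p))) := by
            refine tendsto_const_nhds.div ?_ (Real.rpow_pos_of_pos hd _).ne'
            refine Tendsto.rpow_const ?_ (Or.inl hd.ne')
            have := (tendsto_one_div_add_atTop_nhds_zero_nat (𝕜 := ℝ)).const_add |(|z.2 - z.1|)|
            rw [add_zero, abs_abs] at this
            simpa only [abs_abs] using this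
          have := (ENNReal.continuous_ofReal.tendsto _).comp
            (hlim.mul_const (levelInteraction m lam (V z.1) (V z.2)))
          refine le_of_eq (Eq.trans ?_ this.liminf_eq.symm)
          congr 1
          ring
    _ ≤ liminf (fun n => ∫⁻ z, ENNReal.ofReal
          (K n |z.2 - z.1| * levelInteraction m lam (V z.1) (V z.2))
        ∂((volume.restrict (Ioo a b)).prod (volume.restrict (Ioo a b)))) atTop :=
        lintegral_liminf_le hmeas
    _ ≤ _ := by
        refine liminf_le_of_frequently_le' (Frequently.of_forall fun n => ?_)
        refine (lintegral_sortedFun_le hab m lam hlam (K n) (hKc n) (hKanti n) (hK0 n) L W hW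
          hL).trans (lintegral_mono fun z => ?_)
        rcases eq_or_ne z.1 z.2 with hz | hz
        · simp [hz, levelInteraction_self]
        · have hd : 0 < |z.2 - z.1| := abs_pos.2 (sub_ne_zero.2 hz.symm)
          refine ENNReal.ofReal_le_ofReal ?_
          rw [mul_div_assoc, mul_comm]
          refine mul_le_mul_of_nonneg_left ?_ (levelInteraction_nonneg hlam _ _)
          refine div_le_div_of_nonneg_left hδp (Real.rpow_pos_of_pos hd _) ?_
          refine Real.rpow_le_rpow hd.le ?_ (by linarith)
          rw [abs_abs]
          linarith [heps n]

lemma levelInteraction_eq_sum_phik (m : ℕ) (lam : ℕ → ℝ) (i j : ℕ) :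
    levelInteraction m lam i j = ∑ k ∈ Finset.Icc 1 m, lam k * phik (k : ℝ) |(j : ℝ) - i| := by
  refine Finset.sum_congr rfl fun k _ => ?_
  congr 1
  unfold phik
  refine if_congr ?_ rfl rfl
  rw [abs_le, Close]
  constructor
  · rintro ⟨h1, h2⟩
    have h1' : (i : ℝ) ≤ j + k := by exact_mod_cast h1
    have h2' : (j : ℝ) ≤ i + k := by exact_mod_cast h2
    constructor <;> linarith
  · rintro ⟨h1, h2⟩
    constructor
    · have : (i : ℝ) ≤ j + k := by linarith
      exact_mod_cast this
    · have : (j : ℝ) ≤ i + k := by linarith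
      exact_mod_cast this

/-- Levels of the segmentation that are more than `k` apart come from values more than `k` apart. -/
lemma phik_floor_le (k : ℕ) (s t : ℝ) :
    phik (k : ℝ) |(⌊t⌋ : ℝ) - ⌊s⌋| ≤ phik (k : ℝ) |t - s| := by
  unfold phik
  split_ifs with h1 h2 h2 <;> try norm_num
  refine h1 ?_
  rw [abs_le] at h2 ⊢
  have hs := Int.floor_le s
  have ht := Int.floor_le t
  have hs' := Int.lt_floor_add_one s
  have ht' := Int.lt_floor_add_one t
  have e1 : ⌊s⌋ < ⌊t⌋ + k + 1 := by
    have : (⌊s⌋ : ℝ) < ⌊t⌋ + k + 1 := by linarith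
    exact_mod_cast this
  have e2 : ⌊t⌋ < ⌊s⌋ + k + 1 := by
    have : (⌊t⌋ : ℝ) < ⌊s⌋ + k + 1 := by linarith
    exact_mod_cast this
  have f1 : (⌊s⌋ : ℝ) ≤ ⌊t⌋ + k := by exact_mod_cast Int.lt_add_one_iff.1 e1
  have f2 : (⌊t⌋ : ℝ) ≤ ⌊s⌋ + k := by exact_mod_cast Int.lt_add_one_iff.1 e2
  constructor <;> linarith

/-- for a piecewise constant interaction law `φ = Σ λ_k φ_k`, the functional
`Λ_{δ,p}` does not increase under vertical `δ`-segmentation followed by monotone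
rearrangement. -/
theorem segmentation_rearrangement (a b : ℝ) (hab : a < b) (δ p : ℝ) (hδ : 0 < δ) (hp : 1 ≤ p)
    (m : ℕ) (hm : 1 ≤ m) (lam : ℕ → ℝ) (hlam : ∀ k ∈ Finset.Icc 1 m, 0 ≤ lam k)
    (u : ℝ → ℝ) (hu : Measurable u) (hbd : ∃ M : ℝ, ∀ x ∈ Set.Ioo a b, |u x| ≤ M) :
    ∃ v : ℝ → ℝ, Measurable v ∧ MonotoneOn v (Set.Ioo a b) ∧
      (∀ x ∈ Set.Ioo a b, ∃ j : ℤ, v x = δ * j) ∧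
      (∀ j : ℤ, volume {x ∈ Set.Ioo a b | v x = δ * j} =
        volume {x ∈ Set.Ioo a b | δ * (⌊u x / δ⌋ : ℝ) = δ * j}) ∧
      Lambda1 (fun t => ∑ k ∈ Finset.Icc 1 m, lam k * phik (k : ℝ) t) p δ v (Set.Ioo a b) ≤
        Lambda1 (fun t => ∑ k ∈ Finset.Icc 1 m, lam k * phik (k : ℝ) t) p δ u (Set.Ioo a b) := by
  obtain ⟨M, hM⟩ := hbd
  -- `N` shifts the levels of the segmentation into `{0, …, 2 N}`
  set N : ℕ := ⌈M / δ⌉₊ + 1 with hN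
  have hNM : M / δ + 1 ≤ N := by
    rw [hN]
    push_cast
    linarith [Nat.le_ceil (M / δ)]
  have hrange : ∀ x ∈ Ioo a b, 0 ≤ ⌊u x / δ⌋ + (N : ℤ) ∧ ⌊u x / δ⌋ + (N : ℤ) ≤ 2 * N := by
    intro x hx
    have h1 : |u x / δ| ≤ M / δ := by
      rw [abs_div, abs_of_pos hδ]
      exact div_le_div_of_nonneg_right (hM x hx) hδ.le
    rw [abs_le] at h1
    have h2 : -(N : ℤ) ≤ ⌊u x / δ⌋ := Int.le_floor.2 (by push_cast; linarith)
    have h3 : (⌊u x / δ⌋ : ℝ) ≤ N := by linarith [Int.floor_le (u x / δ)]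
    have h4 : ⌊u x / δ⌋ ≤ (N : ℤ) := by exact_mod_cast h3
    omega
  classical
  set W : ℝ → ℕ := fun x => if x ∈ Ioo a b then (⌊u x / δ⌋ + (N : ℤ)).toNat else 0 with hWdef
  have hW : Measurable W := by
    refine Measurable.ite measurableSet_Ioo ?_ measurable_const
    exact (Measurable.of_discrete (f := fun i : ℤ => (i + (N : ℤ)).toNat)).comp
      (Int.measurable_floor.comp (hu.div_const δ))
  have hWx : ∀ x ∈ Ioo a b, (W x : ℤ) = ⌊u x / δ⌋ + N := by
    intro x hx
    simp only [hWdef, if_pos hx]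
    exact Int.toNat_of_nonneg (hrange x hx).1
  have hL : ∀ x, W x ≤ 2 * N := by
    intro x
    by_cases hx : x ∈ Ioo a b
    · have h1 := hWx x hx
      have h2 := hrange x hx
      omega
    · simp only [hWdef, if_neg hx]
      exact Nat.zero_le _
  set V := sortedFun b (2 * N) (levelMeasure a b W) with hVdef
  have hVm : Measurable V := measurable_sortedFun _ _ _
  have hlevel : ∀ (U : ℝ → ℕ) (j : ℤ), volume {x ∈ Ioo a b | (U x : ℤ) - N = j}
      = volume.restrict (Ioo a b) {x | (U x : ℤ) - N = j} := by
    intro U j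
    rw [Measure.restrict_apply' measurableSet_Ioo, inter_comm]
    rfl
  refine ⟨fun x => δ * ((V x : ℝ) - N), ?_, ?_, ?_, ?_, ?_⟩
  · exact (((Measurable.of_discrete (f := Nat.cast)).comp hVm).sub_const _).const_mul δ
  · intro x _ y _ hxy
    have : (V x : ℝ) ≤ V y := by exact_mod_cast sortedFun_mono _ _ _ hxy
    exact mul_le_mul_of_nonneg_left (by linarith) hδ.le
  · intro x _
    exact ⟨(V x : ℤ) - N, by push_cast; ring⟩
  · intro j
    have e1 : {x ∈ Ioo a b | δ * ((V x : ℝ) - N) = δ * j}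
        = {x ∈ Ioo a b | (V x : ℤ) - N = j} := by
      ext x
      simp only [mem_ofPred_eq, mul_right_inj' hδ.ne']
      refine and_congr_right fun _ => ?_
      exact_mod_cast Iff.rfl
    have e2 : {x ∈ Ioo a b | δ * (⌊u x / δ⌋ : ℝ) = δ * j}
        = {x ∈ Ioo a b | (W x : ℤ) - N = j} := by
      ext x
      simp only [mem_ofPred_eq, mul_right_inj' hδ.ne', Int.cast_inj]
      refine and_congr_right fun hx => ?_
      rw [hWx x hx, add_sub_cancel_right]
    rw [e1, e2, hlevel, hlevel]
    rcases lt_or_ge (j + N) 0 with hj | hj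
    · have : ∀ U : ℝ → ℕ, {x | (U x : ℤ) - N = j} = ∅ := by
        intro U
        ext x
        simp only [mem_ofPred_eq, mem_empty_iff_false, iff_false]
        omega
      rw [this, this]
    · have : ∀ U : ℝ → ℕ, {x | (U x : ℤ) - N = j} = {x | U x = (j + N).toNat} := by
        intro U
        ext x
        simp only [mem_ofPred_eq]
        omega
      rw [this, this]
      exact measure_level_sortedFun hab (2 * N) W hW hL _
  · have key := energy_sortedFun_le hab m lam hlam p δ hδ hp (2 * N) W hW hL
    rw [lintegral_prod _ (measurable_energy m lam p δ hVm).aemeasurable,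
      lintegral_prod _ (measurable_energy m lam p δ hW).aemeasurable] at key
    unfold Lambda1
    refine le_trans (le_of_eq ?_) (key.trans ?_)
    · refine lintegral_congr fun x => lintegral_congr fun y => ?_
      have : |δ * ((V y : ℝ) - N) - δ * ((V x : ℝ) - N)| / δ = |(V y : ℝ) - V x| := by
        rw [← mul_sub, abs_mul, abs_of_pos hδ, mul_div_cancel_left₀ _ hδ.ne', sub_sub_sub_cancel_right]
      simp only [this, levelInteraction_eq_sum_phik]
    · refine setLIntegral_mono' measurableSet_Ioo fun x hx =>
        setLIntegral_mono' measurableSet_Ioo fun y hy => ENNReal.ofReal_le_ofReal ?_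
      refine div_le_div_of_nonneg_right (mul_le_mul_of_nonneg_right ?_ (Real.rpow_nonneg hδ.le p))
        (Real.rpow_nonneg (abs_nonneg _) _)
      rw [levelInteraction_eq_sum_phik]
      refine Finset.sum_le_sum fun k hk => mul_le_mul_of_nonneg_left ?_ (hlam k hk)
      have hx' : (W x : ℝ) = ⌊u x / δ⌋ + N := by exact_mod_cast hWx x hx
      have hy' : (W y : ℝ) = ⌊u y / δ⌋ + N := by exact_mod_cast hWx y hy
      have e1 : |(W y : ℝ) - W x| = |(⌊u y / δ⌋ : ℝ) - ⌊u x / δ⌋| := by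
        rw [hx', hy', add_sub_add_right_eq_sub]
      have e2 : |u y - u x| / δ = |u y / δ - u x / δ| := by
        rw [← sub_div, abs_div, abs_of_pos hδ]
      simp only [e1, e2]
      exact phik_floor_le k _ _
end
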